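/- Let {F_n} be the Fibonacci sequence with F_0 = F_1 = 1. Then the real number ξ2 = ∏_{n=3}^∞ (1 - 1/F_n) is transcendental over ℚ. -/

import Mathlib

/-!
Why `ξ₂` is transcendental. Put `D(q) = q ∏ (1 - qⁿ)²⁴`, so that `D(e^{2πiτ}) = Δ(τ)`, and
`q₀ = β² = (3 - √5) / 2`.

*Reduction to modular forms.* For the Fibonacci numbers the factors `1 - 1 / Fₙ` factor further,
in blocks of four (`block`), and the product telescopes into Euler products:
`ξ₂ = (algebraic) · E(q₀)³ E(q₀⁴) / E(q₀²)²` with `E(q) = ∏ (1 - qⁿ)` (`xi_eq`). Hence, if `ξ₂` is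
algebraic, so is `c = D(q₀)³ D(q₀⁴) / D(q₀²)²` (`isAlgebraic_cc`), a modular function of weight
`24` at `q₀`.

*Auxiliary function.* For a parameter `s` and `W = s⁴`, look for a nonzero integer combination
`G(z) = ∑ a(l,i,j) zˡ D(z)²ⁱ D(z²)²ʲ`, `l, i, j < W` (`Fun`), which vanishes at `q₀ᵖ` for all odd
primes `p ≤ s³`. As `D³ D(q⁴) / D(q²)²` takes the algebraic value `c` at `q₀`, the number
`G(q₀ᵖ)` is, up to a nonzero factor, the value at `q₀` of a modular form of weight `96 W` on
`Γ₀(4 p)`, whose Fourier coefficients are integer combinations of products of powers of `q₀` and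
`c`. By Sturm's bound (`sturm`) this form is zero as soon as its first `O(W p)` coefficients vanish.
These are `O(s¹⁰)` linear equations in `s¹²` unknowns, and Siegel's lemma solves them with
`log |a| = O(s⁵)` (`exists_a`).

*Zero estimate.* `G` vanishes at `0` to an order less than `s³⁰` (`zero_est`). Otherwise
`G(e^{-2πy})` is extremely small for a range of small `y`. The transformation `Δ(-1/τ) = τ¹² Δ(τ)`
shows that, up to explicit factors, `G(e^{-2πy})` is close to an exponential polynomial `Qf` with
integer data. This one satisfies a linear recurrence on a grid of points, so it remains small along
the grid, up to a moderately large `y = Y` (`expPoly_bound`); there, however, its leading term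
dominates and it is not small (`Qf_lower`).

*Contradiction.* The first nonzero Taylor coefficient of `G` is an integer, so it is at least `1` in
absolute value. Dividing by the zeros `q₀ᵖ` and applying the maximum principle on a circle of radius
`1 - 1 / (M + 2)`, with `M` the order of vanishing, bounds it by
`exp (O(s⁵)) · q₀ ^ ∑ p` (`one_le_of_zeros`). By Chebyshev's lower bound for the number of primes,
`∑ p` exceeds `s⁵` by a power of `s`, which is absurd for large `s`.
-/

open scoped BigOperators

noncomputable section

/-- Fibonacci sequence with `F 0 = F 1 = 1`. -/
def F : ℕ → ℕ
  | 0 => 1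
  | 1 => 1
  | n + 2 => F (n + 1) + F n

/-- The golden ratio conjugate `β = (√5 - 1)/2`. -/
noncomputable def β : ℝ := (Real.sqrt 5 - 1) / 2

/-- Jacobi theta function `θ₂(q) = 2 q^{1/4} ∑_{n≥0} q^{n(n+1)}`. -/
noncomputable def θ2 (q : ℝ) : ℝ := 2 * q ^ ((1 : ℝ) / 4) * ∑' n : ℕ, q ^ (n * (n + 1))

/-- Jacobi theta function `θ₃(q) = 1 + 2 ∑_{n≥1} q^{n²}`. -/
noncomputable def θ3 (q : ℝ) : ℝ := 1 + 2 * ∑' n : ℕ, q ^ ((n + 1) ^ 2)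

/-- Jacobi theta function `θ₄(q) = 1 + 2 ∑_{n≥1} (-1)^n q^{n²}`. -/
noncomputable def θ4 (q : ℝ) : ℝ := 1 + 2 * ∑' n : ℕ, (-1 : ℝ) ^ (n + 1) * q ^ ((n + 1) ^ 2)

namespace Xi2

/-! ### Modular forms on `Γ₀(4 p)` and the index of this group -/

section

open UpperHalfPlane ModularForm Matrix.SpecialLinearGroup CongruenceSubgroup
open scoped MatrixGroups Manifold

/-- A coset of `Γ₀(4 p)` is determined by the first column of a representative, modulo `4` and, up to
scaling, modulo `p`. The factor `16` is not optimal. -/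
lemma index_Gamma0_le (p : ℕ) (hp : p.Prime) (hp2 : p ≠ 2) :
    (Gamma0 (4 * p)).index ≤ 16 * (p + 1) := by
  have := Fact.mk hp
  have : NeZero p := ⟨hp.ne_zero⟩
  let φ : SL(2, ℤ) → Option (ZMod p) × ZMod 4 × ZMod 4 := fun g =>
    (if (g 1 0 : ZMod p) = 0 then none else some ((g 0 0 : ZMod p) / (g 1 0 : ZMod p)),
      (g 0 0 : ZMod 4), (g 1 0 : ZMod 4))
  have key : ∀ g h : SL(2, ℤ), φ g = φ h → g⁻¹ * h ∈ Gamma0 (4 * p) := by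
    intro g h hgh
    simp only [φ, Prod.mk.injEq] at hgh
    obtain ⟨h1, h2, h3⟩ := hgh
    rw [Gamma0_mem]
    have e : (g⁻¹ * h) 1 0 = g 0 0 * h 1 0 - g 1 0 * h 0 0 := by
      rw [Matrix.SpecialLinearGroup.coe_mul, Matrix.SpecialLinearGroup.coe_inv,
        Matrix.adjugate_fin_two, Matrix.mul_apply, Fin.sum_univ_two]
      simp
      ring
    rw [e, ZMod.intCast_zmod_eq_zero_iff_dvd]
    have c4 : ((4 : ℕ) : ℤ) ∣ g 0 0 * h 1 0 - g 1 0 * h 0 0 := by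
      rw [← ZMod.intCast_zmod_eq_zero_iff_dvd]
      push_cast
      rw [h2, h3]; ring
    have cp : ((p : ℕ) : ℤ) ∣ g 0 0 * h 1 0 - g 1 0 * h 0 0 := by
      rw [← ZMod.intCast_zmod_eq_zero_iff_dvd]
      push_cast
      split_ifs at h1 with ha hb hb
      · rw [ha, hb]; ring
      · simp only [Option.some.injEq] at h1
        field_simp at h1
        rw [h1]; ring
    have : IsCoprime ((4 : ℕ) : ℤ) (p : ℤ) := by
      rw [Nat.isCoprime_iff_coprime]
      have : Nat.Coprime 2 p := (Nat.coprime_primes Nat.prime_two hp).2 (Ne.symm hp2)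
      exact Nat.Coprime.pow_left 2 this
    push_cast at *
    exact this.mul_dvd c4 cp
  rw [Subgroup.index]
  have : Nat.card (SL(2, ℤ) ⧸ Gamma0 (4 * p)) ≤ Nat.card (Option (ZMod p) × ZMod 4 × ZMod 4) := by
    apply Nat.card_le_card_of_injective (fun q => φ q.out)
    intro q r hqr
    rw [← Quotient.out_eq q, ← Quotient.out_eq r]
    exact QuotientGroup.eq.2 (key _ _ hqr)
  refine this.trans ?_
  simp [Nat.card_prod, Finite.card_option, Nat.card_zmod]
  omega

lemma card_quot_le (p : ℕ) (hp : p.Prime) (hp2 : p ≠ 2) :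
    Nat.card (𝒮ℒ ⧸ ((Gamma0 (4 * p)).map (mapGL ℝ)).subgroupOf 𝒮ℒ) ≤ 16 * (p + 1) := by
  have : Nat.card (𝒮ℒ ⧸ ((Gamma0 (4 * p)).map (mapGL ℝ)).subgroupOf 𝒮ℒ)
      = (Gamma0 (4 * p)).index := by
    rw [MonoidHom.range_eq_map]
    change Subgroup.relIndex _ _ = _
    rw [Subgroup.relIndex_map_map_of_injective _ _ (mapGL_injective), Subgroup.relIndex_top_right]
  rw [this]
  exact index_Gamma0_le p hp hp2

/-- `IsMF N k f` means that `f` is (the function underlying) a modular form of weight `k` on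
`Γ₀(N)`. -/
def IsMF (N : ℕ) (k : ℕ) (f : ℍ → ℂ) : Prop :=
  ∃ g : ModularForm ((Gamma0 N).map (mapGL ℝ)) (k : ℤ), ⇑g = f

variable {N k l : ℕ} {f g : ℍ → ℂ}

lemma IsMF.mul (hf : IsMF N k f) (hg : IsMF N l g) : IsMF N (k + l) (f * g) := by
  obtain ⟨f, rfl⟩ := hf
  obtain ⟨g, rfl⟩ := hg
  exact ⟨ModularForm.mcast (by push_cast; rfl) (f.mul g), by ext; rfl⟩

lemma IsMF.one : IsMF N 0 1 := ⟨ModularForm.mcast (by simp) (1 : ModularForm _ 0), by ext; rfl⟩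

lemma IsMF.pow (hf : IsMF N k f) (n : ℕ) : IsMF N (n * k) (f ^ n) := by
  induction n with
  | zero => simpa using IsMF.one
  | succ n ih =>
    rw [pow_succ, add_mul, one_mul]
    exact ih.mul hf

lemma IsMF.smul (hf : IsMF N k f) (c : ℂ) : IsMF N k (c • f) := by
  obtain ⟨f, rfl⟩ := hf
  exact ⟨c • f, by ext; simp⟩

lemma IsMF.sum {ι : Type*} (s : Finset ι) (f : ι → ℍ → ℂ) (hf : ∀ i ∈ s, IsMF N k (f i)) :
    IsMF N k (∑ i ∈ s, f i) := by
  classical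
  induction s using Finset.induction_on with
  | empty => exact ⟨0, by ext; simp⟩
  | insert a s ha ih =>
    rw [Finset.sum_insert ha]
    obtain ⟨x, hx⟩ := hf a (by simp)
    obtain ⟨y, hy⟩ := ih (fun i hi => hf i (by simp [hi]))
    exact ⟨x + y, by ext; simp [← hx, ← hy]⟩

end

/-! ### The discriminant in the variable `q`, and Sturm's bound -/

section

open UpperHalfPlane ModularForm Matrix.SpecialLinearGroup CongruenceSubgroup
open scoped MatrixGroups Manifold Pointwise

/-- The discriminant `Δ` as a function of `q = exp (2 π i τ)` on the unit disc. -/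
noncomputable def D : ℂ → ℂ := cuspFunction 1 ModularForm.discriminant

lemma D_qParam (τ : ℍ) : D (Function.Periodic.qParam 1 τ) = ModularForm.discriminant τ := by
  have := SlashInvariantFormClass.eq_cuspFunction (h := 1) CuspForm.discriminant τ
    (Γ := 𝒮ℒ) (k := 12) (by simp) (by simp)
  simpa [D] using this

/-- The matrix `diag(d, 1)`, acting on the upper half plane by `τ ↦ d τ`. -/
noncomputable def diagG (d : ℕ) (hd : d ≠ 0) : GL (Fin 2) ℝ :=
  Matrix.GeneralLinearGroup.mkOfDetNeZero !![(d : ℝ), 0; 0, 1] (by simp [hd])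

lemma diagG_det (d : ℕ) (hd : d ≠ 0) : (diagG d hd).det.val = d := by
  simp [diagG, Matrix.GeneralLinearGroup.mkOfDetNeZero]

lemma diagG_smul (d : ℕ) (hd : d ≠ 0) (τ : ℍ) : ((diagG d hd • τ : ℍ) : ℂ) = d * τ := by
  rw [UpperHalfPlane.coe_smul_of_det_pos]
  · simp [num, denom, diagG, Matrix.GeneralLinearGroup.mkOfDetNeZero]
  · rw [diagG_det]; positivity

lemma slash_diagG (d : ℕ) (hd : d ≠ 0) (τ : ℍ) :
    (ModularForm.discriminant ∣[(12 : ℤ)] diagG d hd) τ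
      = (d : ℂ) ^ 11 * D (Function.Periodic.qParam 1 τ ^ d) := by
  have h1 : Function.Periodic.qParam 1 τ ^ d
      = Function.Periodic.qParam 1 (diagG d hd • τ : ℍ) := by
    rw [diagG_smul, Function.Periodic.qParam, Function.Periodic.qParam, ← Complex.exp_nat_mul]
    congr 1
    push_cast; ring
  rw [h1, D_qParam, ModularForm.slash_apply, diagG_det]
  have : σ (diagG d hd) = ContinuousAlgEquiv.refl ℝ ℂ := by
    rw [σ, if_pos]
    rw [diagG_det]; positivity
  rw [this]
  simp [denom, diagG, Matrix.GeneralLinearGroup.mkOfDetNeZero]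
  ring_nf

lemma Gamma0_le_conj (N d : ℕ) (hd : d ≠ 0) (hdN : d ∣ N) :
    (Gamma0 N).map (mapGL ℝ) ≤ ConjAct.toConjAct (diagG d hd)⁻¹ • 𝒮ℒ := by
  rintro _ ⟨γ, hγ, rfl⟩
  rw [Subgroup.mem_pointwise_smul_iff_inv_smul_mem]
  rw [SetLike.mem_coe, Gamma0_mem, ZMod.intCast_zmod_eq_zero_iff_dvd] at hγ
  obtain ⟨e, he⟩ : (d : ℤ) ∣ γ 1 0 := (Int.natCast_dvd_natCast.2 hdN).trans hγ
  have hdet := γ.det_coe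
  rw [Matrix.det_fin_two, he] at hdet
  obtain ⟨g', h00, h01, h10, h11⟩ : ∃ g' : SL(2, ℤ), g' 0 0 = γ 0 0 ∧ g' 0 1 = d * γ 0 1 ∧
      g' 1 0 = e ∧ g' 1 1 = γ 1 1 :=
    ⟨⟨!![γ 0 0, d * γ 0 1; e, γ 1 1], by rw [Matrix.det_fin_two_of]; linarith⟩, rfl, rfl, rfl, rfl⟩
  refine ⟨g', ?_⟩
  rw [← map_inv, inv_inv, ConjAct.toConjAct_smul, eq_mul_inv_iff_mul_eq]
  have hR : ((γ 1 0 : ℤ) : ℝ) = d * e := by rw [he]; push_cast; rfl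
  ext i j
  fin_cases i <;> fin_cases j <;>
    simp [diagG, Matrix.GeneralLinearGroup.mkOfDetNeZero, Matrix.mul_apply, Fin.sum_univ_two, hR, h00, h01, h10,
      h11, mul_comm]

lemma isMF_D (N d : ℕ) (hd : d ≠ 0) (hdN : d ∣ N) :
    IsMF N 12 (fun τ => D (Function.Periodic.qParam 1 τ ^ d)) := by
  have hle := Gamma0_le_conj N d hd hdN
  let t := ModularForm.translate CuspForm.discriminant (diagG d hd) (Γ := 𝒮ℒ) (k := 12)
  have h0 : IsMF N 12 ⇑t := ⟨{
    toFun := t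
    holo' := t.holo'
    bdd_at_cusps' := fun hc => t.bdd_at_cusps' (hc.mono hle)
    slash_action_eq' := fun γ hγ => t.slash_action_eq' γ (hle hγ) }, rfl⟩
  convert h0.smul (((d : ℂ) ^ 11)⁻¹) using 1
  ext τ
  have : t τ = (d : ℂ) ^ 11 * D (Function.Periodic.qParam 1 τ ^ d) := slash_diagG d hd τ
  rw [Pi.smul_apply, this, smul_eq_mul, inv_mul_cancel_left₀]
  exact pow_ne_zero _ (by exact_mod_cast hd)

/-- Sturm's bound: a modular form of weight `k` on `Γ₀(4 p)` vanishing at `∞` to an order `B` larger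
than `k [SL₂(ℤ) : Γ₀(4 p)] / 12` is zero. The norm of the form to level one vanishes at least as
much, since the other conjugates are bounded at `∞`, so Sturm's bound in level one applies. -/
lemma sturm (p : ℕ) (hp : p.Prime) (hp2 : p ≠ 2) (k : ℕ) (f : ℍ → ℂ) (hf : IsMF (4 * p) k f)
    (B : ℕ) (hB : k * (16 * (p + 1)) < 12 * B)
    (hO : f =O[atImInfty] (fun τ => Function.Periodic.qParam 1 τ ^ B)) : f = 0 := by
  have : NeZero (4 * p) := ⟨by have := hp.ne_zero; omega⟩
  obtain ⟨f, rfl⟩ := hf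
  rw [← ModularForm.norm_eq_zero_iff (ℋ := 𝒮ℒ) (𝒢 := (Gamma0 (4 * p)).map (mapGL ℝ)) (k := (k:ℤ))]
  have hcard := card_quot_le p hp hp2
  set n := ModularForm.norm 𝒮ℒ f with hn
  have hnO : (n : ℍ → ℂ) =O[atImInfty] (fun τ => Function.Periodic.qParam 1 τ ^ B) := by
    rw [hn, ModularForm.coe_norm]
    have key : ∀ q : 𝒮ℒ ⧸ ((Gamma0 (4 * p)).map (mapGL ℝ)).subgroupOf 𝒮ℒ,
        SlashInvariantForm.quotientFunc f q =O[atImInfty] (fun _ => (1 : ℂ)) := by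
      rintro ⟨r⟩
      obtain ⟨_, r, rfl⟩ := r
      have := ModularFormClass.bdd_at_infty_slash f (k := k)
        (Γ := (Gamma0 (4 * p)).map (mapGL ℝ)) r⁻¹
      change (⇑f ∣[(k : ℤ)] (mapGL ℝ r)⁻¹) =O[atImInfty] _
      rw [← map_inv]
      exact this.trans (Asymptotics.isBigO_of_le _ (by simp))
    let := Fintype.ofFinite (𝒮ℒ ⧸ ((Gamma0 (4 * p)).map (mapGL ℝ)).subgroupOf 𝒮ℒ)
    classical
    rw [← Finset.mul_prod_erase _ _ (Finset.mem_univ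
      (QuotientGroup.mk (1 : 𝒮ℒ) : 𝒮ℒ ⧸ ((Gamma0 (4 * p)).map (mapGL ℝ)).subgroupOf 𝒮ℒ))]
    have h1 : SlashInvariantForm.quotientFunc f (QuotientGroup.mk (1 : 𝒮ℒ) :
        𝒮ℒ ⧸ ((Gamma0 (4 * p)).map (mapGL ℝ)).subgroupOf 𝒮ℒ)
        =O[atImInfty] (fun τ => Function.Periodic.qParam 1 τ ^ B) := by
      change (⇑f ∣[(k : ℤ)] ((1 : 𝒮ℒ).val)⁻¹) =O[atImInfty] _
      simpa using hO
    have h2 := Asymptotics.IsBigO.finsetProd (s := Finset.univ.erase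
      (QuotientGroup.mk (1 : 𝒮ℒ) : 𝒮ℒ ⧸ ((Gamma0 (4 * p)).map (mapGL ℝ)).subgroupOf 𝒮ℒ))
      (fun i _ => key i)
    have := h1.mul h2
    rw [Finset.prod_fn]
    simp only [Finset.prod_const_one, mul_one] at this
    exact this
  have han : AnalyticAt ℂ (cuspFunction 1 n) 0 :=
    ModularFormClass.analyticAt_cuspFunction_zero n one_pos (by simp)
  have hcusp : ∀ τ : ℍ, cuspFunction 1 n (Function.Periodic.qParam 1 τ) = n τ := fun τ =>
    SlashInvariantFormClass.eq_cuspFunction n τ (by simp) (by simp)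
  have hq := qParam_tendsto_atImInfty one_pos
  have hord : (B : ℕ∞) ≤ analyticOrderAt (cuspFunction 1 n) 0 := by
    by_contra! hlt
    have hne : analyticOrderAt (cuspFunction 1 n) 0 ≠ ⊤ := ne_top_of_lt hlt
    obtain ⟨g, hg, hg0, hge⟩ := han.analyticOrderAt_ne_top.1 hne
    set m := analyticOrderNatAt (cuspFunction 1 n) 0 with hm
    have hmB : m < B := by
      rw [← Nat.cast_analyticOrderNatAt hne] at hlt
      exact_mod_cast hlt
    have t1 : Filter.Tendsto (fun τ : ℍ => g (Function.Periodic.qParam 1 τ)) atImInfty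
        (nhds (g 0)) := hg.continuousAt.tendsto.comp hq
    have t2 : (fun τ : ℍ => g (Function.Periodic.qParam 1 τ)) =O[atImInfty]
        (fun τ : ℍ => Function.Periodic.qParam 1 τ ^ (B - m)) := by
      obtain ⟨c, hc⟩ := hnO.bound
      refine Asymptotics.IsBigO.of_bound c ?_
      filter_upwards [hc, hq.eventually hge] with τ h1 h2
      rw [hcusp] at h2
      have hq0 : 0 < ‖Function.Periodic.qParam 1 τ‖ :=
        norm_pos_iff.2 (Complex.exp_ne_zero _)
      rw [h2, sub_zero, smul_eq_mul, norm_mul, norm_pow, norm_pow,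
        ← Nat.sub_add_cancel hmB.le, pow_add, ← mul_assoc, mul_comm] at h1
      rw [norm_pow]
      exact le_of_mul_le_mul_right h1 (pow_pos hq0 m)
    have t3 : Filter.Tendsto (fun τ : ℍ => Function.Periodic.qParam 1 τ ^ (B - m)) atImInfty
        (nhds 0) := by
      have := hq.pow (B - m)
      rwa [zero_pow (by omega)] at this
    exact hg0 (tendsto_nhds_unique t1 (t2.trans_tendsto t3))
  apply ModularForm.sturm_bound_levelOne
  have h12 : ((k : ℤ) * (Nat.card (𝒮ℒ ⧸ ((Gamma0 (4 * p)).map (mapGL ℝ)).subgroupOf 𝒮ℒ) : ℕ)).toNat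
      / 12 < B := by
    rw [← Nat.cast_mul, Int.toNat_natCast, Nat.div_lt_iff_lt_mul (by norm_num)]
    calc _ ≤ k * (16 * (p + 1)) := Nat.mul_le_mul_left _ hcard
      _ < B * 12 := by linarith
  refine lt_of_lt_of_le (by exact_mod_cast h12) (PowerSeries.nat_le_order _ B ?_)
  intro i hi
  rw [qExpansion_coeff]
  rw [natCast_le_analyticOrderAt_iff_iteratedDeriv_eq_zero han] at hord
  rw [hord i hi, mul_zero]

end

/-! ### Power series on the unit disc -/

section

open Metric

/-- `PSer a f`: on the open unit disc `f` is the sum of the power series with coefficients `a`. -/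
def PSer (a : ℕ → ℂ) (f : ℂ → ℂ) : Prop := ∀ z : ℂ, ‖z‖ < 1 → HasSum (fun n => a n * z ^ n) (f z)

lemma PSer.hasFPowerSeriesOnBall {a : ℕ → ℂ} {f : ℂ → ℂ} (h : PSer a f) :
    HasFPowerSeriesOnBall f (FormalMultilinearSeries.ofScalars ℂ a) 0 1 where
  r_le := by
    refine ENNReal.le_of_forall_nnreal_lt fun r hr => ?_
    apply FormalMultilinearSeries.le_radius_of_tendsto (l := 0)
    have hr1 : ‖((r : ℝ) : ℂ)‖ < 1 := by
      have h1 : ‖((r : ℝ) : ℂ)‖ = r := by simp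
      exact lt_of_eq_of_lt h1 (by exact_mod_cast hr)
    have := (h _ hr1).summable.tendsto_atTop_zero.norm
    simpa [FormalMultilinearSeries.ofScalars_norm] using this
  r_pos := one_pos
  hasSum := by
    intro y hy
    have hy1 : ‖y‖ < 1 := by
      rw [show (1 : ENNReal) = ENNReal.ofReal 1 by simp, Metric.eball_ofReal] at hy
      simpa using hy
    simpa [FormalMultilinearSeries.ofScalars_apply_eq, mul_comm] using h y hy1

lemma PSer.differentiableOn {a : ℕ → ℂ} {f : ℂ → ℂ} (h : PSer a f) :
    DifferentiableOn ℂ f (ball 0 1) := by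
  have := h.hasFPowerSeriesOnBall.differentiableOn
  rwa [show (1 : ENNReal) = ENNReal.ofReal 1 by simp, Metric.eball_ofReal] at this

lemma PSer.diffContOnCl {a : ℕ → ℂ} {f : ℂ → ℂ} (h : PSer a f) {r : ℝ} (hr : r < 1) :
    DiffContOnCl ℂ f (ball 0 r) := by
  apply DifferentiableOn.diffContOnCl
  refine h.differentiableOn.mono ?_
  exact closure_ball_subset_closedBall.trans (closedBall_subset_ball hr)

/-- Cauchy's estimate for the coefficients. -/
lemma PSer.norm_coeff_le {a : ℕ → ℂ} {f : ℂ → ℂ} (h : PSer a f) {r M : ℝ} (hr0 : 0 < r)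
    (hr : r < 1) (hM : ∀ z : ℂ, ‖z‖ = r → ‖f z‖ ≤ M) (n : ℕ) : ‖a n‖ ≤ M / r ^ n := by
  have h1 := Complex.norm_iteratedDeriv_le_of_forall_mem_sphere_norm_le (c := 0) (n := n) hr0
    (h.diffContOnCl hr) (fun z hz => hM z (by simpa using hz))
  have h2 := h.hasFPowerSeriesOnBall.factorial_smul 1 n
  rw [FormalMultilinearSeries.apply_eq_prod_smul_coeff, 
    FormalMultilinearSeries.coeff_ofScalars] at h2
  simp only [Finset.prod_const_one, one_smul, ← iteratedDeriv_eq_iteratedFDeriv] at h2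
  have h3 : (n.factorial : ℝ) * ‖a n‖ = ‖iteratedDeriv n f 0‖ := by
    rw [← h2]; simp [nsmul_eq_mul]
  rw [← h3, mul_div_assoc] at h1
  exact le_of_mul_le_mul_left h1 (by exact_mod_cast n.factorial_pos)

lemma PSer.ext_zero {a : ℕ → ℂ} {f : ℂ → ℂ} (h : PSer a f) (ha : ∀ n, a n = 0) (z : ℂ)
    (hz : ‖z‖ < 1) : f z = 0 := by
  have := h z hz
  simp only [ha, zero_mul] at this
  exact this.unique hasSum_zero

/-- Factoring out `z ^ M`. -/
lemma PSer.shift {a : ℕ → ℂ} {f : ℂ → ℂ} (h : PSer a f) {M : ℕ} (ha : ∀ n < M, a n = 0) :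
    ∃ g : ℂ → ℂ, PSer (fun n => a (n + M)) g ∧ ∀ z : ℂ, ‖z‖ < 1 → f z = z ^ M * g z := by
  have key : ∀ z : ℂ, ‖z‖ < 1 → Summable (fun n => a (n + M) * z ^ n) := by
    intro z hz
    by_cases hz0 : z = 0
    · subst hz0
      exact summable_of_ne_finset_zero (s := {0}) (fun b hb => by
        rw [zero_pow (by simpa using hb), mul_zero])
    have h1 := (summable_nat_add_iff M).2 (h z hz).summable
    have h2 := h1.mul_left ((z ^ M)⁻¹)
    refine h2.congr fun n => ?_
    field_simp
    ring
  refine ⟨fun z => ∑' n, a (n + M) * z ^ n, fun z hz => (key z hz).hasSum, fun z hz => ?_⟩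
  rw [← (h z hz).tsum_eq, ← (h z hz).summable.sum_add_tsum_nat_add M,
    Finset.sum_eq_zero (fun i hi => by rw [ha i (Finset.mem_range.1 hi), zero_mul]), zero_add,
    ← tsum_mul_left]
  exact tsum_congr fun n => by ring

lemma PSer.norm_le {a : ℕ → ℂ} {f : ℂ → ℂ} (h : PSer a f) {r M : ℝ}
    (hr0 : 0 < r) (hr : r < 1) (hM : ∀ z : ℂ, ‖z‖ = r → ‖f z‖ ≤ M) {z : ℂ} (hz : ‖z‖ ≤ r) :
    ‖f z‖ ≤ M := by
  refine Complex.norm_le_of_forall_mem_frontier_norm_le isBounded_ball (h.diffContOnCl hr)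
    (fun w hw => hM w ?_) ?_
  · rw [frontier_ball _ hr0.ne'] at hw; simpa using hw
  · rw [closure_ball _ hr0.ne']; simpa using hz

/-- `IntSer f`: on the open unit disc, `f` is the sum of a power series with integer
coefficients. -/
def IntSer (f : ℂ → ℂ) : Prop := ∃ a : ℕ → ℤ, PSer (fun n => (a n : ℂ)) f

lemma IntSer.mul {f g : ℂ → ℂ} (hf : IntSer f) (hg : IntSer g) :
    IntSer (fun z => f z * g z) := by
  obtain ⟨a, ha⟩ := hf
  obtain ⟨b, hb⟩ := hg
  refine ⟨fun n => ∑ kl ∈ Finset.HasAntidiagonal.antidiagonal n, a kl.1 * b kl.2, fun z hz => ?_⟩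
  have h1 := (ha z hz).summable.norm
  have h2 := (hb z hz).summable.norm
  have h3 := (summable_norm_sum_mul_antidiagonal_of_summable_norm h1 h2).of_norm.hasSum
  rw [← tsum_mul_tsum_eq_tsum_sum_antidiagonal_of_summable_norm h1 h2, (ha z hz).tsum_eq,
    (hb z hz).tsum_eq] at h3
  have h4 : ∀ u v : ℕ → ℂ, u = v → HasSum v (f z * g z) → HasSum u (f z * g z) :=
    fun u v h => h ▸ fun h => h
  refine h4 _ _ (funext fun n => ?_) h3
  push_cast
  rw [Finset.sum_mul]
  refine Finset.sum_congr rfl fun kl hkl => ?_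
  rw [← Finset.HasAntidiagonal.mem_antidiagonal.1 hkl, pow_add]; ring

lemma IntSer.const (c : ℤ) : IntSer (fun _ => (c : ℂ)) := by
  refine ⟨fun n => if n = 0 then c else 0, fun z hz => ?_⟩
  convert hasSum_ite_eq 0 (c : ℂ) using 2 with n
  by_cases h : n = 0 <;> simp [h]

lemma IntSer.id : IntSer (fun z => z) := by
  refine ⟨fun n => if n = 1 then 1 else 0, fun z hz => ?_⟩
  convert hasSum_ite_eq 1 z using 2 with n
  by_cases h : n = 1 <;> simp [h]

lemma IntSer.pow {f : ℂ → ℂ} (hf : IntSer f) (n : ℕ) : IntSer (fun z => f z ^ n) := by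
  induction n with
  | zero => simpa using IntSer.const 1
  | succ n ih => simpa only [pow_succ] using ih.mul hf

lemma IntSer.sum {ι : Type*} (s : Finset ι) (f : ι → ℂ → ℂ) (hf : ∀ i ∈ s, IntSer (f i)) :
    IntSer (fun z => ∑ i ∈ s, f i z) := by
  classical
  choose! a ha using hf
  refine ⟨fun n => ∑ i ∈ s, a i n, fun z hz => ?_⟩
  convert hasSum_sum (fun i hi => ha i hi z hz) using 2 with n
  push_cast
  rw [Finset.sum_mul]

lemma IntSer.comp_pow {f : ℂ → ℂ} (hf : IntSer f) {d : ℕ} (hd : d ≠ 0) :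
    IntSer (fun z => f (z ^ d)) := by
  obtain ⟨a, ha⟩ := hf
  refine ⟨fun n => if d ∣ n then a (n / d) else 0, fun z hz => ?_⟩
  have h1 := ha (z ^ d) (by rw [norm_pow]; exact pow_lt_one₀ (norm_nonneg _) hz hd)
  have hinj : Function.Injective (fun n : ℕ => d * n) :=
    fun x y h => Nat.eq_of_mul_eq_mul_left (Nat.pos_of_ne_zero hd) h
  rw [← hinj.hasSum_iff]
  · convert h1 using 2 with n
    simp [Nat.pos_of_ne_zero hd, pow_mul]
  · intro x hx
    have : ¬ d ∣ x := fun ⟨c, hc⟩ => hx ⟨c, hc.symm⟩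
    simp [this]

end

/-! ### Product formula, growth and inversion formula of the discriminant -/

section

open UpperHalfPlane ModularForm Matrix.SpecialLinearGroup CongruenceSubgroup
open scoped MatrixGroups Manifold Pointwise

/-- Euler's product `∏ (1 - z ^ n)`, `n ≥ 1`. -/
noncomputable def E (z : ℂ) : ℂ := ∏' n : ℕ, (1 - z ^ (n + 1))

lemma summable_pow_succ {z : ℂ} (hz : ‖z‖ < 1) : Summable (fun n : ℕ => ‖z ^ (n + 1)‖) := by
  simpa using (summable_nat_add_iff 1).mpr (summable_geometric_of_lt_one (norm_nonneg _) hz)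

lemma D_eq {z : ℂ} (hz : ‖z‖ < 1) : D z = z * E z ^ 24 := by
  have := discriminant_cuspFunction_eqOn (x := z) (by simpa using hz)
  rw [D, this, E]
  simp only []
  rw [(multipliable_one_sub_pow hz).tprod_pow]

/-- The `n`-th coefficient of `E` is the sum of `(-1) ^ #s` over the partitions `s` of `n` into
distinct parts. -/
lemma intSer_E : IntSer E := by
  classical
  let deg : Finset ℕ → ℕ := fun s => ∑ i ∈ s, (i + 1)
  have hfin : ∀ n, Finite {s : Finset ℕ // deg s = n} := by
    intro n
    refine Set.Finite.to_subtype (s := {s | deg s = n}) ?_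
    refine (Finset.finite_toSet (Finset.range n).powerset).subset ?_
    intro s hs
    simp only [Finset.coe_powerset, Set.mem_preimage, Set.mem_powerset_iff]
    intro i hi
    have h1 : i + 1 ≤ deg s := Finset.single_le_sum (f := fun i => i + 1) (fun _ _ => by omega) hi
    have h2 : deg s = n := hs
    simp only [Finset.coe_range, Set.mem_Iio]
    omega
  have hft : ∀ n, Fintype {s : Finset ℕ // deg s = n} := fun n => Fintype.ofFinite _
  refine ⟨fun n => ∑ s : {s : Finset ℕ // deg s = n}, (-1) ^ (s.1.card), fun z hz => ?_⟩
  have hs : Summable (fun s : Finset ℕ => ∏ i ∈ s, (-z ^ (i + 1))) :=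
    summable_finset_prod_of_summable_norm (by simpa using summable_pow_succ hz)
  have h1 : E z = ∑' s : Finset ℕ, ∏ i ∈ s, (-z ^ (i + 1)) := by
    rw [← tprod_one_add hs, E]
    simp only [sub_eq_add_neg]
  have h2 : HasSum (fun s : Finset ℕ => ∏ i ∈ s, (-z ^ (i + 1))) (E z) := h1 ▸ hs.hasSum
  rw [← (Equiv.sigmaFiberEquiv deg).hasSum_iff] at h2
  refine h2.sigma (g := _) fun n => ?_
  have h3 := hasSum_fintype (fun s : {s : Finset ℕ // deg s = n} => ∏ i ∈ s.1, (-z ^ (i + 1)))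
  convert h3 using 1
  · rfl
  push_cast
  rw [Finset.sum_mul]
  refine Finset.sum_congr rfl fun s _ => ?_
  rw [Finset.prod_congr rfl (fun i _ => neg_eq_neg_one_mul (z ^ (i + 1))), Finset.prod_mul_distrib,
    Finset.prod_const, Finset.prod_pow_eq_pow_sum, show ∑ i ∈ s.1, (i + 1) = n from s.2]

lemma IntSer.congr {f g : ℂ → ℂ} (hf : IntSer f) (h : ∀ z, ‖z‖ < 1 → g z = f z) : IntSer g := by
  obtain ⟨a, ha⟩ := hf
  exact ⟨a, fun z hz => by rw [h z hz]; exact ha z hz⟩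

lemma intSer_D : IntSer D :=
  (IntSer.id.mul (intSer_E.pow 24)).congr fun z hz => D_eq hz

lemma E_ne_zero {z : ℂ} (hz : ‖z‖ < 1) : E z ≠ 0 := by
  have := tprod_one_add_ne_zero_of_summable (f := fun n : ℕ => -z ^ (n + 1)) (fun i => ?_)
    (by simpa using summable_pow_succ hz)
  · simpa [E, sub_eq_add_neg] using this
  · rw [← sub_eq_add_neg, sub_ne_zero]
    intro h
    have h2 : ‖z ^ (i + 1)‖ < 1 := by
      rw [norm_pow]; exact pow_lt_one₀ (norm_nonneg _) hz (by omega)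
    rw [← h] at h2; simp at h2

lemma D_ne_zero {z : ℂ} (hz0 : z ≠ 0) (hz : ‖z‖ < 1) : D z ≠ 0 := by
  rw [D_eq hz]; exact mul_ne_zero hz0 (pow_ne_zero _ (E_ne_zero hz))

/-- The growth of the cusp form `Δ` of weight `12` towards the boundary of the disc. -/
lemma D_growth : ∃ C : ℝ, 1 ≤ C ∧ ∀ z : ℂ, ‖z‖ < 1 → ‖D z‖ ≤ C * (1 / (1 - ‖z‖)) ^ 6 := by
  obtain ⟨C, hC⟩ := CuspFormClass.exists_bound (Γ := 𝒮ℒ) (k := 12) CuspForm.discriminant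
  refine ⟨max 1 (C * (2 * Real.pi) ^ 6), le_max_left _ _, fun z hz => ?_⟩
  have hpos : 0 < 1 - ‖z‖ := by linarith
  by_cases hz0 : z = 0
  · subst hz0
    rw [D_eq (by simp)]; simp
  have him := Function.Periodic.im_invQParam_pos_of_norm_lt_one one_pos hz hz0
  set τ : ℍ := ⟨_, him⟩ with hτ
  have hq : Function.Periodic.qParam 1 τ = z := Function.Periodic.qParam_right_inv one_ne_zero hz0
  have h1 := hC τ
  rw [CuspForm.coe_discriminant, ← D_qParam, hq] at h1
  have hn : ‖z‖ = Real.exp (-2 * Real.pi * τ.im) := by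
    rw [← hq, Function.Periodic.norm_qParam]; simp
  have h2 : 1 - ‖z‖ ≤ 2 * Real.pi * τ.im := by
    have := Real.add_one_le_exp (-2 * Real.pi * τ.im)
    rw [hn]; linarith
  have h3 : τ.im ^ (((12 : ℤ) : ℝ) / 2) = τ.im ^ 6 := by
    rw [show (((12 : ℤ) : ℝ) / 2) = ((6 : ℕ) : ℝ) by norm_num, Real.rpow_natCast]
  rw [h3] at h1
  have hC0 : 0 ≤ C := by
    have := (norm_nonneg _).trans h1
    by_contra hneg
    have : C / τ.im ^ 6 < 0 := div_neg_of_neg_of_pos (by linarith) (pow_pos τ.im_pos 6)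
    linarith
  calc ‖D z‖ ≤ C / τ.im ^ 6 := h1
    _ = C * (2 * Real.pi) ^ 6 * (1 / (2 * Real.pi * τ.im)) ^ 6 := by
        have := τ.im_pos.ne'
        have := Real.pi_pos.ne'
        field_simp
    _ ≤ max 1 (C * (2 * Real.pi) ^ 6) * (1 / (1 - ‖z‖)) ^ 6 := by
        gcongr
        · exact le_max_right _ _

/-- `Δ(-1/τ) = τ¹² Δ(τ)` at `τ = i y`. -/
lemma D_S {y : ℝ} (hy : 0 < y) :
    D ((Real.exp (-2 * Real.pi * y) : ℝ) : ℂ)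
      = ((y : ℂ) ^ 12)⁻¹ * D ((Real.exp (-2 * Real.pi / y) : ℝ) : ℂ) := by
  have key : ∀ (t : ℝ) (ht : 0 < t), D ((Real.exp (-2 * Real.pi * t) : ℝ) : ℂ)
      = ModularForm.discriminant ⟨Complex.I * t, by simpa using ht⟩ := by
    intro t ht
    rw [← D_qParam]
    congr 1
    simp only [Function.Periodic.qParam]
    push_cast
    congr 1
    linear_combination (2 * Real.pi * t : ℂ) * (-Complex.I_mul_I)
  have h := congrFun discriminant_S_invariant ⟨Complex.I * y, by simpa using hy⟩
  rw [SL_slash_apply] at h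
  rw [key y hy, show -2 * Real.pi / y = -2 * Real.pi * (1 / y) by ring, key (1 / y) (by positivity), ← h]
  have e1 : (ModularGroup.S • (⟨Complex.I * y, by simpa using hy⟩ : ℍ) : ℍ)
      = ⟨Complex.I * ((1 / y : ℝ) : ℂ), by simpa using hy⟩ := by
    rw [modular_S_smul]
    ext1
    simp [mul_comm]
  rw [e1, mul_comm]
  congr 1
  rw [ModularGroup.denom_S]
  have : (Complex.I * y) ^ (-(12:ℤ)) = ((y : ℂ) ^ 12)⁻¹ := by
    rw [zpow_neg, mul_zpow]
    have : Complex.I ^ (12 : ℤ) = 1 := by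
      rw [show (12 : ℤ) = ((4 * 3 : ℕ) : ℤ) by norm_num, zpow_natCast, pow_mul, Complex.I_pow_four, one_pow]
    rw [this, one_mul]; norm_cast
  exact this

/-- On `(0, 1/2]` the quotient `D x / x` is real, in `[0, 1]`, and within `48 x` of `1`. -/
lemma D_real {x : ℝ} (hx0 : 0 < x) (hx : x ≤ 1 / 2) :
    ∃ u : ℝ, D (x : ℂ) = ((x * u : ℝ) : ℂ) ∧ 0 ≤ u ∧ u ≤ 1 ∧ 1 - u ≤ 48 * x := by
  have hx1 : ‖(x : ℂ)‖ < 1 := by rw [Complex.norm_real, Real.norm_of_nonneg hx0.le]; linarith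
  have hxi : ∀ n : ℕ, 0 ≤ 1 - x ^ (n + 1) ∧ 1 - x ^ (n + 1) ≤ 1 := fun n =>
    ⟨sub_nonneg.2 (pow_le_one₀ hx0.le (by linarith)), by linarith [pow_pos hx0 (n + 1)]⟩
  have hm : Multipliable (fun n : ℕ => (1 - x ^ (n + 1) : ℝ)) := by
    apply multipliable_one_add_of_summable (f := fun n ↦ -x ^ (n + 1))
    have := summable_pow_succ hx1
    simpa using this
  set P : ℝ := ∏' n : ℕ, (1 - x ^ (n + 1)) with hP
  have hE : E x = (P : ℂ) := by
    have := (hm.hasProd.map Complex.ofRealHom Complex.continuous_ofReal).tprod_eq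
    rw [E, hP]
    simpa [Function.comp_def] using this
  have ht := hm.hasProd.tendsto_prod_nat
  have hP0 : 0 ≤ P := ge_of_tendsto' ht fun n => Finset.prod_nonneg fun i _ => (hxi i).1
  have hP1 : P ≤ 1 := le_of_tendsto' ht fun n =>
    Finset.prod_le_one (fun i _ => (hxi i).1) (fun i _ => (hxi i).2)
  have hP2 : 1 - 2 * x ≤ P := by
    refine ge_of_tendsto' ht fun n => ?_
    have h1 : ∀ n : ℕ, 1 - ∑ i ∈ Finset.range n, x ^ (i + 1)
        ≤ ∏ i ∈ Finset.range n, (1 - x ^ (i + 1)) := by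
      intro n
      induction n with
      | zero => simp
      | succ n ih =>
        rw [Finset.sum_range_succ, Finset.prod_range_succ]
        have := Finset.prod_le_one (s := Finset.range n) (fun i _ => (hxi i).1) (fun i _ => (hxi i).2)
        have := pow_pos hx0 (n + 1)
        nlinarith
    refine le_trans ?_ (h1 n)
    have h2 : ∀ n : ℕ, ∑ i ∈ Finset.range n, x ^ (i + 1) ≤ 2 * x - x ^ n * (2 * x) := by
      intro n
      induction n with
      | zero => simp
      | succ n ih =>
        rw [Finset.sum_range_succ]
        have := pow_pos hx0 n
        rw [pow_succ]
        nlinarith [mul_pos this hx0]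
    have := h2 n
    have := mul_pos (pow_pos hx0 n) hx0
    linarith
  refine ⟨P ^ 24, ?_, by positivity, pow_le_one₀ hP0 hP1, ?_⟩
  · rw [D_eq hx1, hE]; push_cast; ring
  · have := one_add_mul_le_pow (a := P - 1) (by linarith) 24
    push_cast at this
    rw [add_sub_cancel] at this
    linarith

end

/-! ### The Fibonacci product as a value of modular functions -/

section

lemma F_eq (n : ℕ) : F n = Nat.fib (n + 1) := by
  induction n using Nat.strong_induction_on with
  | _ n ih =>
    match n with
    | 0 => rfl
    | 1 => rfl
    | n + 2 =>
      rw [F, ih (n + 1) (by omega), ih n (by omega), Nat.fib_add_two (n := n + 1), add_comm]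

/-- The nome `q₀ = ((√5 - 1) / 2) ^ 2`. -/
def q0 : ℝ := (3 - Real.sqrt 5) / 2

lemma sqrt5_bounds : 2.236 < Real.sqrt 5 ∧ Real.sqrt 5 < 2.237 :=
  ⟨Real.lt_sqrt_of_sq_lt (by norm_num), (Real.sqrt_lt' (by norm_num)).2 (by norm_num)⟩

lemma q0_pos : 0 < q0 := by have := sqrt5_bounds; rw [q0]; linarith [this.2]

lemma q0_lt : q0 < 0.382 := by have := sqrt5_bounds; rw [q0]; norm_num at *; linarith [this.1]

lemma q0_quad : q0 ^ 2 = 3 * q0 - 1 := by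
  rw [q0]; have := Real.sq_sqrt (show (0 : ℝ) ≤ 5 by norm_num); nlinarith

lemma norm_q0 : ‖(q0 : ℂ)‖ = q0 := by rw [Complex.norm_real, Real.norm_of_nonneg q0_pos.le]

/-- Binet's formula; `2 b + 1 = √5`, and `b` is minus the conjugate of the golden ratio. -/
lemma inv_fib (j : ℕ) (hj : j ≠ 0) {b : ℝ} (hb : b = (Real.sqrt 5 - 1) / 2) :
    1 / (Nat.fib j : ℝ) = (2 * b + 1) * b ^ j / (1 - (-1) ^ j * (b ^ j) ^ 2) := by
  have h5 := sqrt5_bounds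
  have hb0 : 0 < b := by rw [hb]; linarith [h5.1]
  have hb1 : b < 1 := by rw [hb]; linarith [h5.2]
  have hsq := Real.sq_sqrt (show (0 : ℝ) ≤ 5 by norm_num)
  have hs : 2 * b + 1 = Real.sqrt 5 := by rw [hb]; ring
  have hphi : Real.goldenRatio = b⁻¹ := by
    refine eq_inv_of_mul_eq_one_left ?_
    rw [Real.goldenRatio, hb]; nlinarith
  have hpsi : Real.goldenConj = -b := by rw [Real.goldenConj, hb]; ring
  rw [Real.coe_fib_eq, hphi, hpsi, hs, inv_pow, neg_pow]
  have hbj : 0 < b ^ j := pow_pos hb0 j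
  have hbj1 : b ^ j < 1 := pow_lt_one₀ hb0.le hb1 hj
  have hden : 1 - (-1) ^ j * (b ^ j) ^ 2 ≠ 0 := by
    rcases neg_one_pow_eq_or ℝ j with h | h <;> rw [h] <;> nlinarith
  have h1 : (b ^ j)⁻¹ - (-1) ^ j * b ^ j = (1 - (-1) ^ j * (b ^ j) ^ 2) / b ^ j := by
    field_simp
  rw [h1]
  field_simp

/-- Four consecutive factors, evaluated through the factorizations
`f₄ₙ - 1 = f₂ₙ₊₁ L₂ₙ₋₁`, `f₄ₙ₊₁ - 1 = f₂ₙ L₂ₙ₊₁`, `f₄ₙ₊₂ - 1 = f₂ₙ L₂ₙ₊₂`,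
`f₄ₙ₊₃ - 1 = f₂ₙ₊₂ L₂ₙ₊₁` of shifted Fibonacci numbers. -/
lemma block (M : ℕ) :
    (1 - 1 / (Nat.fib (4 * M + 4) : ℝ)) * (1 - 1 / (Nat.fib (4 * M + 5) : ℝ)) *
      (1 - 1 / (Nat.fib (4 * M + 6) : ℝ)) * (1 - 1 / (Nat.fib (4 * M + 7) : ℝ)) *
      ((1 + q0 ^ (2 * M + 2)) * (1 + q0 ^ (4 * M + 5)) * (1 + q0 ^ (4 * M + 7))) =
    (1 - q0 ^ (2 * M + 1)) * (1 - q0 ^ (2 * M + 2)) * (1 + q0 ^ (2 * M + 4)) *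
      (1 - q0 ^ (2 * M + 4)) * (1 - q0 ^ (2 * M + 3)) := by
  obtain ⟨b, hb⟩ : ∃ b : ℝ, b = (Real.sqrt 5 - 1) / 2 := ⟨_, rfl⟩
  have h5 := sqrt5_bounds
  have hb0 : 0 < b := by rw [hb]; linarith [h5.1]
  have hb1 : b < 1 := by rw [hb]; linarith [h5.2]
  have hsq := Real.sq_sqrt (show (0 : ℝ) ≤ 5 by norm_num)
  have hq : q0 = b ^ 2 := by rw [hb, q0]; nlinarith
  have hbb : b ^ 2 = 1 - b := by rw [hb]; nlinarith
  rw [inv_fib _ (by omega) hb, inv_fib _ (by omega) hb, inv_fib _ (by omega) hb,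
    inv_fib _ (by omega) hb]
  have hv0 : 0 < b ^ (4 * M + 2) := pow_pos hb0 _
  set v := b ^ (4 * M + 2) with hv
  have hv1 : v < 1 := pow_lt_one₀ hb0.le hb1 (by omega)
  have e4 : b ^ (4 * M + 4) = v * b ^ 2 := by rw [hv]; ring
  have e5 : b ^ (4 * M + 5) = v * b ^ 3 := by rw [hv]; ring
  have e6 : b ^ (4 * M + 6) = v * b ^ 4 := by rw [hv]; ring
  have e7 : b ^ (4 * M + 7) = v * b ^ 5 := by rw [hv]; ring
  have s4 : (-1 : ℝ) ^ (4 * M + 4) = 1 := Even.neg_one_pow ⟨2 * M + 2, by ring⟩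
  have s5 : (-1 : ℝ) ^ (4 * M + 5) = -1 := Odd.neg_one_pow ⟨2 * M + 2, by ring⟩
  have s6 : (-1 : ℝ) ^ (4 * M + 6) = 1 := Even.neg_one_pow ⟨2 * M + 3, by ring⟩
  have s7 : (-1 : ℝ) ^ (4 * M + 7) = -1 := Odd.neg_one_pow ⟨2 * M + 3, by ring⟩
  have q1 : q0 ^ (2 * M + 1) = v := by rw [hq, ← pow_mul, hv]; ring
  have q2 : q0 ^ (2 * M + 2) = v * b ^ 2 := by rw [hq, ← pow_mul, hv]; ring
  have q3 : q0 ^ (2 * M + 3) = v * b ^ 4 := by rw [hq, ← pow_mul, hv]; ring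
  have q4 : q0 ^ (2 * M + 4) = v * b ^ 6 := by rw [hq, ← pow_mul, hv]; ring
  have q5 : q0 ^ (4 * M + 5) = v ^ 2 * b ^ 6 := by rw [hq, ← pow_mul, hv, ← pow_mul]; ring
  have q7 : q0 ^ (4 * M + 7) = v ^ 2 * b ^ 10 := by rw [hq, ← pow_mul, hv, ← pow_mul]; ring
  rw [e4, e5, e6, e7, s4, s5, s6, s7, q1, q2, q3, q4, q5, q7]
  have b3 : b ^ 3 = 2 * b - 1 := by linear_combination b * hbb - hbb
  have b4 : b ^ 4 = 2 - 3 * b := by linear_combination b * b3 + 2 * hbb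
  have b5 : b ^ 5 = 5 * b - 3 := by linear_combination b * b4 - 3 * hbb
  have b6 : b ^ 6 = 5 - 8 * b := by linear_combination b * b5 + 5 * hbb
  have hbp : ∀ n : ℕ, 0 < v * b ^ n ∧ v * b ^ n < 1 := fun n =>
    ⟨by positivity, by
      have := pow_le_one₀ (n := n) hb0.le hb1.le
      nlinarith⟩
  have t4 : 1 - (2 * b + 1) * (v * b ^ 2) / (1 - 1 * (v * b ^ 2) ^ 2)
      = (1 + v * b ^ 4) * (1 - v) / ((1 - v * b ^ 2) * (1 + v * b ^ 2)) := by
    have h1 : 1 - v * b ^ 2 ≠ 0 := by linarith [(hbp 2).2]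
    have h2 : 1 + v * b ^ 2 ≠ 0 := by linarith [(hbp 2).1]
    rw [show 1 - 1 * (v * b ^ 2) ^ 2 = (1 - v * b ^ 2) * (1 + v * b ^ 2) by ring, eq_div_iff (by positivity), sub_mul, div_mul_cancel₀ _ (by positivity)]
    linear_combination (-v) * (b4 + 2 * b3 + hbb)
  have t5 : 1 - (2 * b + 1) * (v * b ^ 3) / (1 - -1 * (v * b ^ 3) ^ 2)
      = (1 - v * b ^ 2) * (1 - v * b ^ 4) / (1 + v ^ 2 * b ^ 6) := by
    have h2 : 1 + v ^ 2 * b ^ 6 ≠ 0 := by positivity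
    rw [show 1 - -1 * (v * b ^ 3) ^ 2 = 1 + v ^ 2 * b ^ 6 by ring, eq_div_iff h2, sub_mul, div_mul_cancel₀ _ h2]
    linear_combination (-v) * (b3 + 2 * b4 - b4 - hbb)
  have t6 : 1 - (2 * b + 1) * (v * b ^ 4) / (1 - 1 * (v * b ^ 4) ^ 2)
      = (1 - v * b ^ 2) * (1 + v * b ^ 6) / ((1 - v * b ^ 4) * (1 + v * b ^ 4)) := by
    have h1 : 1 - v * b ^ 4 ≠ 0 := by linarith [(hbp 4).2]
    have h2 : 1 + v * b ^ 4 ≠ 0 := by linarith [(hbp 4).1]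
    rw [show 1 - 1 * (v * b ^ 4) ^ 2 = (1 - v * b ^ 4) * (1 + v * b ^ 4) by ring, eq_div_iff (by positivity), sub_mul, div_mul_cancel₀ _ (by positivity)]
    linear_combination (-v) * (2 * b5 + b4 + b6 - hbb)
  have t7 : 1 - (2 * b + 1) * (v * b ^ 5) / (1 - -1 * (v * b ^ 5) ^ 2)
      = (1 - v * b ^ 6) * (1 - v * b ^ 4) / (1 + v ^ 2 * b ^ 10) := by
    have h2 : 1 + v ^ 2 * b ^ 10 ≠ 0 := by positivity
    rw [show 1 - -1 * (v * b ^ 5) ^ 2 = 1 + v ^ 2 * b ^ 10 by ring, eq_div_iff h2, sub_mul, div_mul_cancel₀ _ h2]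
    linear_combination (-v) * (b6 + b5 - b4)
  rw [t4, t5, t6, t7]
  have h1 : 1 - v * b ^ 2 ≠ 0 := by linarith [(hbp 2).2]
  have h2 : 1 + v * b ^ 2 ≠ 0 := by linarith [(hbp 2).1]
  have h3 : 1 - v * b ^ 4 ≠ 0 := by linarith [(hbp 4).2]
  have h4 : 1 + v * b ^ 4 ≠ 0 := by linarith [(hbp 4).1]
  have h5 : 1 + v ^ 2 * b ^ 6 ≠ 0 := by positivity
  have h6 : 1 + v ^ 2 * b ^ 10 ≠ 0 := by positivity
  field_simp

/-- Partial products of Euler's product. -/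
def Ep (q : ℝ) (n : ℕ) : ℝ := ∏ i ∈ Finset.range n, (1 - q ^ (i + 1))

lemma Ep_succ (q : ℝ) (n : ℕ) : Ep q (n + 1) = Ep q n * (1 - q ^ (n + 1)) := Finset.prod_range_succ _ _

/-- Partial products of `∏ (1 + q ^ n)` over odd `n`. -/
def Gp (q : ℝ) (n : ℕ) : ℝ := ∏ i ∈ Finset.range n, (1 + q ^ (2 * i + 1))

lemma Gp_succ (q : ℝ) (n : ℕ) : Gp q (n + 1) = Gp q n * (1 + q ^ (2 * n + 1)) :=
  Finset.prod_range_succ _ _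

/-- The finite form of `∏ (1 + q^(2n-1)) = E(q²)² / (E(q) E(q⁴))`. -/
lemma Gp_eq (q : ℝ) (m : ℕ) : Gp q m * Ep q (2 * m) * Ep (q ^ 4) m = Ep (q ^ 2) (2 * m) * Ep (q ^ 2) m := by
  induction m with
  | zero => simp [Gp, Ep]
  | succ m ih =>
    rw [show 2 * (m + 1) = 2 * m + 1 + 1 by ring, Gp_succ, Ep_succ, Ep_succ, Ep_succ, Ep_succ, Ep_succ, Ep_succ]
    have e1 : ∀ k, (q ^ 4) ^ k = (q ^ k) ^ 4 := fun k => by rw [← pow_mul, ← pow_mul, mul_comm]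
    have e2 : ∀ k, (q ^ 2) ^ k = (q ^ k) ^ 2 := fun k => by rw [← pow_mul, ← pow_mul, mul_comm]
    simp only [e1, e2]
    have e3 : q ^ (2 * m + 1 + 1) = (q ^ (m + 1)) ^ 2 := by rw [← pow_mul]; ring
    rw [e3]
    linear_combination (1 + q ^ (2 * m + 1)) * (1 - q ^ (2 * m + 1)) * (1 - (q ^ (m + 1)) ^ 2) * (1 - (q ^ (m + 1)) ^ 4) * ih

lemma partial_product (M : ℕ) :
    (∏ n ∈ Finset.Icc 3 (4 * M + 2), (1 - 1 / (F n : ℝ))) *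
      ((1 - q0) * (1 - q0 ^ 2) * (1 + q0 ^ 2) * Gp q0 (2 * M + 2)) =
    Ep q0 (2 * M) * Ep q0 (2 * M + 2) * (1 + q0 ^ (2 * M + 2)) * ((1 + q0) * (1 + q0 ^ 3)) := by
  induction M with
  | zero => simp [Ep, Gp, Finset.prod_range_succ]
  | succ M ih =>
    have hb := block M
    rw [show 4 * (M + 1) + 2 = 4 * M + 2 + 1 + 1 + 1 + 1 by ring]
    rw [Finset.prod_Icc_succ_top (by omega), Finset.prod_Icc_succ_top (by omega),
      Finset.prod_Icc_succ_top (by omega), Finset.prod_Icc_succ_top (by omega)]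
    simp only [F_eq] at ih ⊢
    rw [show 4 * M + 2 + 1 + 1 = 4 * M + 4 by ring, show 4 * M + 4 + 1 = 4 * M + 5 by ring,
      show 4 * M + 5 + 1 = 4 * M + 6 by ring, show 4 * M + 6 + 1 = 4 * M + 7 by ring,
      show 2 * (M + 1) + 2 = 2 * M + 2 + 1 + 1 by ring, Gp_succ, Gp_succ, Ep_succ, Ep_succ,
      show 2 * (M + 1) = 2 * M + 1 + 1 by ring, Ep_succ q0 (2 * M + 1), Ep_succ q0 (2 * M)]
    rw [show 2 * (2 * M + 2) + 1 = 4 * M + 5 by ring, show 2 * (2 * M + 2 + 1) + 1 = 4 * M + 7 by ring,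
      show 2 * M + 2 + 1 + 1 = 2 * M + 4 by ring, show 2 * M + 2 + 1 = 2 * M + 3 by ring,
      show 2 * M + 1 + 1 = 2 * M + 2 by ring]
    have hY : Ep q0 (2 * M + 2) = Ep q0 (2 * M) * (1 - q0 ^ (2 * M + 1)) * (1 - q0 ^ (2 * M + 2)) := by
      rw [Ep_succ, Ep_succ]
    have hne : 1 + q0 ^ (2 * M + 2) ≠ 0 := by have := pow_pos q0_pos (2 * M + 2); positivity
    apply mul_left_cancel₀ hne
    generalize (∏ n ∈ Finset.Icc 3 (4 * M + 2), (1 - 1 / (Nat.fib (n + 1) : ℝ))) = P at ih ⊢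
    generalize (1 - 1 / (Nat.fib (4 * M + 4) : ℝ)) = f4 at hb ⊢
    generalize (1 - 1 / (Nat.fib (4 * M + 5) : ℝ)) = f5 at hb ⊢
    generalize (1 - 1 / (Nat.fib (4 * M + 6) : ℝ)) = f6 at hb ⊢
    generalize (1 - 1 / (Nat.fib (4 * M + 7) : ℝ)) = f7 at hb ⊢
    generalize 1 + q0 ^ (4 * M + 5) = x5 at hb ⊢
    generalize 1 + q0 ^ (4 * M + 7) = x7 at hb ⊢
    generalize 1 - q0 ^ (2 * M + 1) = x1 at *
    generalize 1 + q0 ^ (2 * M + 2) = x2 at *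
    generalize 1 - q0 ^ (2 * M + 2) = y2 at *
    generalize 1 - q0 ^ (2 * M + 3) = x3 at *
    generalize 1 + q0 ^ (2 * M + 4) = x4 at *
    generalize 1 - q0 ^ (2 * M + 4) = y4 at *
    generalize (1 - q0) * (1 - q0 ^ 2) * (1 + q0 ^ 2) = k1 at *
    generalize (1 + q0) * (1 + q0 ^ 3) = k2 at *
    generalize Ep q0 (2 * M + 2) = Y at *
    generalize Ep q0 (2 * M) = X at *
    generalize Gp q0 (2 * M + 2) = G at *
    linear_combination (f4 * f5 * f6 * f7 * x2 * x5 * x7) * ih + X * Y * x2 * k2 * hb +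
      x2 * X * k2 * x1 * y2 * x4 * y4 * x3 * hY

lemma Ep_tendsto {q : ℝ} (h0 : 0 ≤ q) (h1 : q < 1) :
    Filter.Tendsto (fun n => ((Ep q n : ℝ) : ℂ)) Filter.atTop (nhds (E q)) := by
  have h : ‖(q : ℂ)‖ < 1 := by rwa [Complex.norm_real, Real.norm_of_nonneg h0]
  have := (ModularForm.multipliable_one_sub_pow h).hasProd.tendsto_prod_nat
  simpa [Ep, E] using this

/-- `ξ₂` in terms of Euler products at `q₀`, `q₀²`, `q₀⁴`. -/
lemma xi_eq {ξ : ℝ} (h2 : Filter.Tendsto (fun N : ℕ => ∏ n ∈ Finset.Icc 3 N, (1 - 1 / (F n : ℝ)))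
      Filter.atTop (nhds ξ)) :
    (ξ : ℂ) * ((1 - q0) * (1 - q0 ^ 2) * (1 + q0 ^ 2)) * (E (q0 ^ 2)) ^ 2 =
    (E q0) ^ 3 * E (q0 ^ 4) * ((1 + q0) * (1 + q0 ^ 3)) := by
  have hq0 := q0_pos
  have hq1 : q0 < 1 := by linarith [q0_lt]
  have a2 : q0 ^ 2 < 1 := pow_lt_one₀ hq0.le hq1 (by norm_num)
  have a4 : q0 ^ 4 < 1 := pow_lt_one₀ hq0.le hq1 (by norm_num)
  have t1 : Filter.Tendsto (fun M : ℕ => 2 * M) Filter.atTop Filter.atTop :=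
    Filter.tendsto_atTop_mono (fun n => by simp only [id]; omega) Filter.tendsto_id
  have t2 : Filter.Tendsto (fun M : ℕ => 2 * M + 2) Filter.atTop Filter.atTop :=
    Filter.tendsto_atTop_mono (fun n => by simp only [id]; omega) Filter.tendsto_id
  have t3 : Filter.Tendsto (fun M : ℕ => 4 * M + 2) Filter.atTop Filter.atTop :=
    Filter.tendsto_atTop_mono (fun n => by simp only [id]; omega) Filter.tendsto_id
  have t4 : Filter.Tendsto (fun M : ℕ => 2 * (2 * M + 2)) Filter.atTop Filter.atTop := t1.comp t2
  have hξ : Filter.Tendsto (fun M : ℕ => ((∏ n ∈ Finset.Icc 3 (4 * M + 2), (1 - 1 / (F n : ℝ)) : ℝ) : ℂ))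
      Filter.atTop (nhds (ξ : ℂ)) :=
    (Complex.continuous_ofReal.tendsto _).comp (h2.comp t3)
  have L1 := Ep_tendsto hq0.le hq1
  have L2 := Ep_tendsto (pow_pos hq0 2).le a2
  have L4 := Ep_tendsto (pow_pos hq0 4).le a4
  have Lq : Filter.Tendsto (fun M : ℕ => (1 + (q0 : ℂ) ^ (2 * M + 2))) Filter.atTop (nhds (1 + 0)) := by
    refine Filter.Tendsto.const_add _ ?_
    exact (tendsto_pow_atTop_nhds_zero_of_norm_lt_one (by rwa [norm_q0])).comp t2
  have lhs := (hξ.mul_const ((1 - q0 : ℂ) * (1 - q0 ^ 2) * (1 + q0 ^ 2))).mul ((L2.comp t4).mul (L2.comp t2))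
  have rhs := (((((L1.comp t1).mul (L1.comp t2)).mul Lq).mul_const ((1 + q0 : ℂ) * (1 + q0 ^ 3))).mul
    ((L1.comp t4).mul (L4.comp t2)))
  have := tendsto_nhds_unique (lhs.congr fun M => ?_) rhs
  · push_cast at this
    linear_combination this
  · have h1 := partial_product M
    have h2 := Gp_eq q0 (2 * M + 2)
    simp only [Function.comp_def]
    rw [← Complex.ofReal_mul (Ep (q0 ^ 2) _), ← h2]
    have h1' := congrArg (fun x : ℝ => (x : ℂ)) h1
    push_cast at h1' ⊢
    linear_combination ((Ep q0 (2 * (2 * M + 2)) : ℂ) * (Ep (q0 ^ 4) (2 * M + 2) : ℂ)) * h1'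

/-- The value at `q₀` of `D(q)³ D(q⁴) / D(q²)²`. It is the 24th power of `E(q₀)³ E(q₀⁴) / E(q₀²)²`
times a power of `q₀`, hence algebraic if `ξ₂` is. -/
def cc : ℂ := D q0 ^ 3 * D (q0 ^ 4) / D (q0 ^ 2) ^ 2

lemma isIntegral_q0 : IsIntegral ℤ (q0 : ℂ) := by
  refine ⟨Polynomial.X ^ 2 - 3 * Polynomial.X + 1, ?_, ?_⟩
  · monicity!
  · have := congrArg (fun x : ℝ => (x : ℂ)) q0_quad
    push_cast at this
    simp [Polynomial.eval₂_add, Polynomial.eval₂_sub, Polynomial.eval₂_mul]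
    linear_combination this

lemma norm_q0_pow_lt (d : ℕ) (hd : d ≠ 0) : ‖(q0 : ℂ) ^ d‖ < 1 := by
  rw [norm_pow, norm_q0]; exact pow_lt_one₀ q0_pos.le (by linarith [q0_lt]) hd

lemma D_q0_pow_ne (d : ℕ) (hd : d ≠ 0) : D ((q0 : ℂ) ^ d) ≠ 0 :=
  D_ne_zero (pow_ne_zero _ (by exact_mod_cast q0_pos.ne')) (norm_q0_pow_lt d hd)

lemma cc_ne : cc ≠ 0 := by
  have := D_q0_pow_ne 1 (by norm_num)
  rw [pow_one] at this
  exact div_ne_zero (mul_ne_zero (pow_ne_zero _ this) (D_q0_pow_ne 4 (by norm_num)))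
    (pow_ne_zero _ (D_q0_pow_ne 2 (by norm_num)))

lemma isAlgebraic_cc {ξ : ℝ} (h2 : Filter.Tendsto (fun N : ℕ => ∏ n ∈ Finset.Icc 3 N, (1 - 1 / (F n : ℝ)))
      Filter.atTop (nhds ξ)) (hξ : IsAlgebraic ℚ ξ) : IsAlgebraic ℚ cc := by
  have h := xi_eq h2
  have hq : IsAlgebraic ℚ (q0 : ℂ) := (isIntegral_q0.tower_top (A := ℚ)).isAlgebraic
  have hξ' : IsAlgebraic ℚ (ξ : ℂ) := hξ.algebraMap (A := ℂ)
  have hE2 := E_ne_zero (norm_q0_pow_lt 2 (by norm_num))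
  have hp : ∀ n : ℕ, (1 + (q0 : ℂ) ^ n) ≠ 0 := fun n => by
    have := pow_pos q0_pos n
    exact_mod_cast (by positivity : 1 + q0 ^ n ≠ 0)
  have e : cc = (q0 : ℂ) ^ 3 * (ξ * ((1 - q0 ^ 1) * (1 - q0 ^ 2) * (1 + q0 ^ 2)) * ((1 + (q0 : ℂ) ^ 1) * (1 + (q0 : ℂ) ^ 3))⁻¹) ^ 24 := by
    have h1 := hp 1
    have h3 := hp 3
    have hq : (q0 : ℂ) ≠ 0 := by exact_mod_cast q0_pos.ne'
    rw [cc, D_eq (by simpa using norm_q0_pow_lt 1 (by norm_num)), D_eq (norm_q0_pow_lt 2 (by norm_num)), D_eq (norm_q0_pow_lt 4 (by norm_num))]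
    have : (ξ * ((1 - q0 ^ 1) * (1 - q0 ^ 2) * (1 + q0 ^ 2)) * ((1 + (q0 : ℂ) ^ 1) * (1 + (q0 : ℂ) ^ 3))⁻¹ : ℂ)
        = (E q0) ^ 3 * E (q0 ^ 4) / (E (q0 ^ 2)) ^ 2 := by
      rw [← div_eq_mul_inv, div_eq_div_iff (mul_ne_zero h1 h3) (pow_ne_zero _ hE2)]
      linear_combination h
    rw [this]
    field_simp
  rw [e]
  have hA : ∀ n : ℕ, IsAlgebraic ℚ (1 + (q0 : ℂ) ^ n) := fun n => isAlgebraic_one.add (hq.pow n)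
  have hS : ∀ n : ℕ, IsAlgebraic ℚ (1 - (q0 : ℂ) ^ n) := fun n => isAlgebraic_one.sub (hq.pow n)
  exact (hq.pow 3).mul (((hξ'.mul (((hS 1).mul (hS 2)).mul (hA 2))).mul ((hA 1).mul (hA 3)).inv).pow 24)

end

/-! ### Siegel's lemma over a ring generated by two algebraic integers -/

section

/-- Powers of an algebraic integer expand over the lower powers with integer coefficients growing
at most geometrically. -/
lemma pow_expand {x : ℂ} (hx : IsIntegral ℤ x) : ∃ d A : ℕ, 1 ≤ A ∧ ∀ m : ℕ, ∃ v : ℕ → ℤ,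
    (∀ i, |v i| ≤ (A : ℤ) ^ m) ∧ x ^ m = ∑ i ∈ Finset.range (d + 1), (v i : ℂ) * x ^ i := by
  obtain ⟨p, hp, hpx⟩ := hx
  have hd : p.natDegree ≠ 0 := by
    intro h
    rw [hp.natDegree_eq_zero.1 h] at hpx
    simp at hpx
  obtain ⟨d, hd⟩ := Nat.exists_eq_succ_of_ne_zero hd
  have hrec : x ^ (d + 1) = -∑ i ∈ Finset.range (d + 1), (p.coeff i : ℂ) * x ^ i := by
    rw [Polynomial.eval₂_eq_sum_range, hd, Finset.sum_range_succ] at hpx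
    have : p.coeff (d + 1) = 1 := by
      rw [show d + 1 = p.natDegree from hd.symm]; exact hp
    simp only [Nat.succ_eq_add_one, this, map_one, one_mul] at hpx
    simp only [eq_intCast] at hpx
    linear_combination hpx
  obtain ⟨H, hH⟩ : ∃ H : ℕ, ∀ i, |p.coeff i| ≤ (H : ℤ) := by
    refine ⟨∑ i ∈ p.support, (p.coeff i).natAbs, fun i => ?_⟩
    by_cases h : i ∈ p.support
    · have := Finset.single_le_sum (f := fun i => (p.coeff i).natAbs) (fun _ _ => Nat.zero_le _) h
      have h2 : ((p.coeff i).natAbs : ℤ) ≤ ((∑ i ∈ p.support, (p.coeff i).natAbs : ℕ) : ℤ) := by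
        exact_mod_cast this
      rwa [Int.natCast_natAbs] at h2
    · rw [Polynomial.notMem_support_iff.1 h]; simp; positivity
  refine ⟨d, H + 1, by omega, fun m => ?_⟩
  induction m with
  | zero =>
    refine ⟨fun i => if i = 0 then 1 else 0, fun i => by by_cases h : i = 0 <;> simp [h], ?_⟩
    rw [Finset.sum_eq_single 0] <;> simp +contextual
  | succ m ih =>
    obtain ⟨v, hv, hvx⟩ := ih
    refine ⟨fun i => match i with
      | 0 => - v d * p.coeff 0
      | i + 1 => v i - v d * p.coeff (i + 1), fun i => ?_, ?_⟩
    · have h1 : ∀ i, |v d * p.coeff i| ≤ ((H + 1 : ℕ) : ℤ) ^ m * H := fun i => by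
        rw [abs_mul]; exact mul_le_mul (hv d) (hH i) (abs_nonneg _) (by positivity)
      have h0 : (0 : ℤ) ≤ ((H + 1 : ℕ) : ℤ) ^ m := by positivity
      rw [pow_succ]
      cases i with
      | zero =>
        simp only [neg_mul, abs_neg]
        have := h1 0
        push_cast at *; linarith
      | succ i =>
        simp only []
        have := abs_sub (v i) (v d * p.coeff (i + 1))
        have := h1 (i + 1)
        have := hv i
        push_cast at *; linarith
    · rw [pow_succ, hvx, Finset.sum_mul, Finset.sum_range_succ, mul_assoc, ← pow_succ, hrec,
        Finset.sum_range_succ' _ d, Finset.sum_range_succ' _ d]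
      push_cast
      rw [neg_add, mul_add, mul_neg, Finset.mul_sum, ← add_assoc, ← sub_eq_add_neg,
        ← Finset.sum_sub_distrib]
      congr 1
      · refine Finset.sum_congr rfl fun i _ => ?_
        ring
      · ring

attribute [local instance] Matrix.seminormedAddCommGroup

/-- Siegel's lemma with at least twice as many unknowns as equations and all bounds in
exponential form. -/
lemma siegel_exp {α ι : Type} [Fintype α] [Fintype ι] [Nonempty α] (A : Matrix α ι ℤ)
    (hcard : 2 * Fintype.card α ≤ Fintype.card ι) {T : ℝ} (hT : 0 ≤ T)
    (hA : ∀ i j, |(A i j : ℝ)| ≤ Real.exp T) :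
    ∃ a : ι → ℤ, a ≠ 0 ∧ A.mulVec a = 0 ∧ ∀ j, |(a j : ℝ)| ≤
      Real.exp ((T + Real.log (Fintype.card ι)) * (2 * Fintype.card α / Fintype.card ι)) := by
  have hm : 0 < Fintype.card α := Fintype.card_pos
  obtain ⟨a, ha0, ha, hn⟩ := Int.Matrix.exists_ne_zero_int_vec_norm_le A (by omega) hm
  refine ⟨a, ha0, ha, fun j => ?_⟩
  have hmR : (0 : ℝ) < Fintype.card α := by exact_mod_cast hm
  have hcR : 2 * (Fintype.card α : ℝ) ≤ Fintype.card ι := by exact_mod_cast hcard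
  have h1 : |(a j : ℝ)| ≤ ‖a‖ := by
    have := norm_le_pi_norm a j
    rwa [Int.norm_eq_abs] at this
  refine h1.trans (hn.trans ?_)
  have hnA : ‖A‖ ≤ Real.exp T := by
    refine (Matrix.norm_le_iff (Real.exp_pos T).le).2 fun i j => ?_
    rw [Int.norm_eq_abs]; exact hA i j
  have hmax : max 1 ‖A‖ ≤ Real.exp T := max_le (Real.one_le_exp hT) hnA
  have hnpos : (0 : ℝ) < Fintype.card ι := by linarith
  have h2 : (Fintype.card ι : ℝ) * max 1 ‖A‖ ≤ Real.exp (T + Real.log (Fintype.card ι)) := by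
    rw [Real.exp_add, Real.exp_log hnpos, mul_comm]
    exact mul_le_mul_of_nonneg_right hmax hnpos.le
  have h1n : (1 : ℝ) ≤ Fintype.card ι := by
    have : (1 : ℝ) ≤ Fintype.card α := by exact_mod_cast hm
    linarith
  have hlog := Real.log_nonneg h1n
  calc _ ≤ (Real.exp (T + Real.log (Fintype.card ι))) ^ ((Fintype.card α : ℝ) / (Fintype.card ι - Fintype.card α)) := by
        apply Real.rpow_le_rpow _ h2
        · apply div_nonneg hmR.le; linarith
        · have := le_max_left 1 ‖A‖; positivity
    _ = Real.exp ((T + Real.log (Fintype.card ι)) * ((Fintype.card α : ℝ) / (Fintype.card ι - Fintype.card α))) := by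
        rw [← Real.exp_mul]
    _ ≤ _ := by
        apply Real.exp_le_exp.2
        apply mul_le_mul_of_nonneg_left _ (by positivity)
        rw [div_le_div_iff₀ (by linarith) hnpos]
        nlinarith

/-- Siegel's lemma for linear equations whose coefficients are integer multiples of monomials
in two fixed algebraic integers. -/
lemma siegel_alg {x y : ℂ} (hx : IsIntegral ℤ x) (hy : IsIntegral ℤ y) :
    ∃ d A : ℕ, 1 ≤ A ∧ 1 ≤ d ∧ ∀ (ε ι : Type) [Fintype ε] [Fintype ι] [Nonempty ε]
      (f : ε → ι → ℤ) (u v : ε → ι → ℕ) (T : ℝ) (U : ℕ), 0 ≤ T → (∀ e i, u e i + v e i ≤ U) →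
      (∀ e i, |(f e i : ℝ)| ≤ Real.exp T) → 2 * (d * Fintype.card ε) ≤ Fintype.card ι →
      ∃ a : ι → ℤ, a ≠ 0 ∧
        (∀ i, |(a i : ℝ)| ≤ Real.exp ((T + U * Real.log A + Real.log (Fintype.card ι)) *
          (2 * (d * Fintype.card ε) / Fintype.card ι))) ∧
        ∀ e, ∑ i, (a i : ℂ) * ((f e i : ℂ) * x ^ u e i * y ^ v e i) = 0 := by
  obtain ⟨d1, A1, hA1, h1⟩ := pow_expand hx
  obtain ⟨d2, A2, hA2, h2⟩ := pow_expand hy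
  choose p hp hpx using h1
  choose r hr hry using h2
  refine ⟨(d1 + 1) * (d2 + 1), A1 * A2, Nat.mul_pos hA1 hA2, Nat.mul_pos (by omega) (by omega), ?_⟩
  intro ε ι _ _ _ f u v T U hT huv hf hcard
  let M : Matrix (ε × Fin (d1 + 1) × Fin (d2 + 1)) ι ℤ :=
    fun e i => f e.1 i * p (u e.1 i) e.2.1 * r (v e.1 i) e.2.2
  have hcardα : Fintype.card (ε × Fin (d1 + 1) × Fin (d2 + 1))
      = (d1 + 1) * (d2 + 1) * Fintype.card ε := by
    simp; ring
  have hA1R : (1 : ℝ) ≤ A1 := by exact_mod_cast hA1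
  have hA2R : (1 : ℝ) ≤ A2 := by exact_mod_cast hA2
  have hlog1 : 0 ≤ Real.log ((A1 * A2 : ℕ) : ℝ) := Real.log_natCast_nonneg _
  have hM : ∀ e i, |(M e i : ℝ)| ≤ Real.exp (T + U * Real.log ((A1 * A2 : ℕ) : ℝ)) := by
    intro e i
    have ep : |(p (u e.1 i) e.2.1 : ℝ)| ≤ (A1 * A2 : ℝ) ^ (u e.1 i) := by
      have : |(p (u e.1 i) e.2.1 : ℝ)| ≤ (A1 : ℝ) ^ (u e.1 i) := by exact_mod_cast hp (u e.1 i) e.2.1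
      refine this.trans (pow_le_pow_left₀ (by linarith) ?_ _)
      nlinarith
    have er : |(r (v e.1 i) e.2.2 : ℝ)| ≤ (A1 * A2 : ℝ) ^ (v e.1 i) := by
      have : |(r (v e.1 i) e.2.2 : ℝ)| ≤ (A2 : ℝ) ^ (v e.1 i) := by exact_mod_cast hr (v e.1 i) e.2.2
      refine this.trans (pow_le_pow_left₀ (by linarith) ?_ _)
      nlinarith
    have hAA : (1 : ℝ) ≤ A1 * A2 := by nlinarith
    have e3 : Real.exp (T + U * Real.log ((A1 * A2 : ℕ) : ℝ)) = Real.exp T * (A1 * A2 : ℝ) ^ U := by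
      rw [Real.exp_add, mul_comm (U : ℝ), Real.exp_mul, Real.exp_log (by push_cast; linarith), Real.rpow_natCast]
      push_cast; rfl
    rw [e3]
    simp only [M]
    push_cast
    rw [abs_mul, abs_mul, mul_assoc]
    refine mul_le_mul (hf _ _) ?_ (by positivity) (Real.exp_pos _).le
    calc _ ≤ (A1 * A2 : ℝ) ^ (u e.1 i) * (A1 * A2 : ℝ) ^ (v e.1 i) :=
          mul_le_mul ep er (abs_nonneg _) (by positivity)
      _ = (A1 * A2 : ℝ) ^ (u e.1 i + v e.1 i) := (pow_add _ _ _).symm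
      _ ≤ _ := pow_le_pow_right₀ hAA (huv _ _)
  obtain ⟨a, ha0, ha, hb⟩ := siegel_exp M (by rw [hcardα]; exact hcard) (by positivity) hM
  refine ⟨a, ha0, fun i => ?_, fun e => ?_⟩
  · have := hb i
    rw [hcardα] at this
    push_cast at this ⊢
    exact this
  · have key : ∀ i, (a i : ℂ) * ((f e i : ℂ) * x ^ u e i * y ^ v e i)
        = ∑ s : Fin (d1 + 1), ∑ t : Fin (d2 + 1), ((M (e, s, t) i * a i : ℤ) : ℂ) * (x ^ (s : ℕ) * y ^ (t : ℕ)) := by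
      intro i
      rw [hpx (u e i), hry (v e i), Finset.sum_range, Finset.sum_range, mul_assoc, Finset.sum_mul_sum,
        Finset.mul_sum, Finset.mul_sum]
      refine Finset.sum_congr rfl fun s _ => ?_
      rw [Finset.mul_sum, Finset.mul_sum]
      refine Finset.sum_congr rfl fun t _ => ?_
      simp only [M]; push_cast; ring
    rw [Finset.sum_congr rfl fun i _ => key i, Finset.sum_comm]
    refine Finset.sum_eq_zero fun s _ => ?_
    rw [Finset.sum_comm]
    refine Finset.sum_eq_zero fun t _ => ?_
    rw [← Finset.sum_mul, ← Int.cast_sum]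
    have := congrFun ha (e, s, t)
    rw [Matrix.mulVec, dotProduct] at this
    rw [this]; simp

end

/-! ### The auxiliary function and the modular forms interpolating it -/

section

open UpperHalfPlane ModularForm Matrix.SpecialLinearGroup CongruenceSubgroup
open scoped MatrixGroups Manifold Pointwise

/-- Cauchy's estimate on the circle of radius `(m + 1) / (m + 2)`. -/
lemma PSer.coeff_bound {a : ℕ → ℂ} {f : ℂ → ℂ} (h : PSer a f) {A : ℝ} (hA : 0 ≤ A) {n : ℕ}
    (hf : ∀ z : ℂ, ‖z‖ < 1 → ‖f z‖ ≤ A * (1 / (1 - ‖z‖)) ^ n) (m : ℕ) :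
    ‖a m‖ ≤ 4 * A * ((m : ℝ) + 2) ^ n := by
  have hm : (0 : ℝ) < m + 2 := by positivity
  have hm1 : (0 : ℝ) < m + 1 := by positivity
  have hr0 : (0 : ℝ) < (m + 1) / (m + 2) := by positivity
  have hr1 : ((m : ℝ) + 1) / (m + 2) < 1 := by rw [div_lt_one hm]; linarith
  have e1 : 1 / (1 - ((m : ℝ) + 1) / (m + 2)) = m + 2 := by
    field_simp; ring
  have h1 := h.norm_coeff_le hr0 hr1 (M := A * ((m : ℝ) + 2) ^ n) (fun z hz => by
    have := hf z (by rw [hz]; exact hr1)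
    rwa [hz, e1] at this) m
  refine h1.trans ?_
  rw [div_eq_mul_inv, ← inv_pow, inv_div]
  have e2 : (((m : ℝ) + 2) / (m + 1)) ^ m ≤ 4 := by
    have h3 : ((m : ℝ) + 2) / (m + 1) ≤ Real.exp (1 / (m + 1)) := by
      have := Real.add_one_le_exp (1 / ((m : ℝ) + 1))
      refine le_trans (le_of_eq ?_) this
      field_simp; ring
    calc _ ≤ (Real.exp (1 / (m + 1))) ^ m := pow_le_pow_left₀ (by positivity) h3 m
      _ = Real.exp (m * (1 / (m + 1))) := (Real.exp_nat_mul _ _).symm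
      _ ≤ Real.exp 1 := by
        apply Real.exp_le_exp.2
        rw [mul_one_div, div_le_one hm1]; linarith
      _ ≤ 4 := by linarith [Real.exp_one_lt_d9]
  calc _ ≤ A * ((m : ℝ) + 2) ^ n * 4 := mul_le_mul_of_nonneg_left e2 (by positivity)
    _ = _ := by ring

lemma one_div_le_of_pow {z : ℂ} (hz : ‖z‖ < 1) {d : ℕ} (hd : d ≠ 0) :
    1 / (1 - ‖z ^ d‖) ≤ 1 / (1 - ‖z‖) := by
  apply one_div_le_one_div_of_le (by linarith)
  rw [norm_pow]
  have := pow_le_of_le_one (norm_nonneg z) hz.le hd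
  linarith

lemma norm_pow_lt_one {z : ℂ} (hz : ‖z‖ < 1) {d : ℕ} (hd : d ≠ 0) : ‖z ^ d‖ < 1 := by
  rw [norm_pow]; exact pow_lt_one₀ (norm_nonneg _) hz hd

lemma D_pow_growth {C : ℝ} (hC : 1 ≤ C)
    (h : ∀ z : ℂ, ‖z‖ < 1 → ‖D z‖ ≤ C * (1 / (1 - ‖z‖)) ^ 6) {z : ℂ} (hz : ‖z‖ < 1) {d : ℕ}
    (hd : d ≠ 0) : ‖D (z ^ d)‖ ≤ C * (1 / (1 - ‖z‖)) ^ 6 := by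
  refine (h _ (norm_pow_lt_one hz hd)).trans ?_
  have h1 : 0 < 1 - ‖z ^ d‖ := by linarith [norm_pow_lt_one hz hd]
  have := one_div_le_of_pow hz hd
  gcongr

/-- The auxiliary function: the combination of the functions `z ^ l D(z) ^ (2 i) D(z²) ^ (2 j)` with
integer coefficients `a (l, i, j)`. -/
noncomputable def Fun (W : ℕ) (a : Fin W × Fin W × Fin W → ℤ) (z : ℂ) : ℂ :=
  ∑ t, (a t : ℂ) * (z ^ (t.1 : ℕ) * (D z ^ (2 * t.2.1 : ℕ) * D (z ^ 2) ^ (2 * t.2.2 : ℕ)))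

/-- The modular forms of weight `96 W` on `Γ₀(4 k)` (as functions of `q`) out of which the forms
interpolating `Fun` at the points `q₀ ^ k` are built. The powers of `D(z)³ D(z⁴)` and of `D(z²)²`,
whose quotient is `cc` at `z = q₀`, make the weight independent of `i` and `j`. -/
noncomputable def trm (W i j k : ℕ) (z : ℂ) : ℂ :=
  (D z ^ 3 * D (z ^ 4)) ^ (2 * W - i - j) * D (z ^ 2) ^ (2 * (i + j)) *
    (D (z ^ k) ^ (2 * i) * D (z ^ (2 * k)) ^ (2 * j))

lemma intSer_D_pow {d : ℕ} (hd : d ≠ 0) : IntSer (fun z => D (z ^ d)) := intSer_D.comp_pow hd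

lemma intSer_trm (W i j : ℕ) {k : ℕ} (hk : k ≠ 0) : IntSer (trm W i j k) :=
  ((((intSer_D.pow 3).mul (intSer_D_pow (by norm_num))).pow _).mul
    ((intSer_D_pow (by norm_num)).pow _)).mul
    (((intSer_D_pow hk).pow _).mul ((intSer_D_pow (by omega)).pow _))

lemma intSer_Fun (W : ℕ) (a : Fin W × Fin W × Fin W → ℤ) : IntSer (Fun W a) :=
  IntSer.sum _ _ fun t _ => (IntSer.const _).mul
    ((IntSer.id.pow _).mul ((intSer_D.pow _).mul ((intSer_D_pow (by norm_num)).pow _)))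

lemma trm_growth {C : ℝ} (hC : 1 ≤ C)
    (h : ∀ z : ℂ, ‖z‖ < 1 → ‖D z‖ ≤ C * (1 / (1 - ‖z‖)) ^ 6) (W : ℕ) {i j k : ℕ} (hi : i < W)
    (hj : j < W) (hk : k ≠ 0) {z : ℂ} (hz : ‖z‖ < 1) :
    ‖trm W i j k z‖ ≤ C ^ (8 * W) * (1 / (1 - ‖z‖)) ^ (48 * W) := by
  set X := C * (1 / (1 - ‖z‖)) ^ 6 with hX
  have hX0 : 0 ≤ X := by
    have : 0 < 1 - ‖z‖ := by linarith
    positivity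
  have h1 : ‖D z‖ ≤ X := h z hz
  have h2 := D_pow_growth hC h hz (d := 2) (by norm_num)
  have h4 := D_pow_growth hC h hz (d := 4) (by norm_num)
  have hk1 := D_pow_growth hC h hz hk
  have hk2 := D_pow_growth hC h hz (d := 2 * k) (by omega)
  rw [← hX] at h2 h4 hk1 hk2
  calc ‖trm W i j k z‖ ≤ (X ^ 3 * X) ^ (2 * W - i - j) * X ^ (2 * (i + j)) *
      (X ^ (2 * i) * X ^ (2 * j)) := by
        rw [trm]
        simp only [norm_mul, norm_pow]
        gcongr
    _ = X ^ (8 * W) := by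
        rw [← pow_succ, ← pow_mul, ← pow_add, ← pow_add, ← pow_add]
        congr 1; omega
    _ = _ := by rw [hX, mul_pow, ← pow_mul]; congr 2; ring

lemma isMF_trm (W : ℕ) {i j p : ℕ} (hi : i < W) (hj : j < W) (hp : p ≠ 0) :
    IsMF (4 * p) (96 * W) (fun τ => trm W i j p (Function.Periodic.qParam 1 τ)) := by
  have h1 := isMF_D (4 * p) 1 (by norm_num) (one_dvd _)
  simp only [pow_one] at h1
  have h2 := isMF_D (4 * p) 2 (by norm_num) ⟨2 * p, by ring⟩
  have h4 := isMF_D (4 * p) 4 (by norm_num) ⟨p, by ring⟩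
  have hp1 := isMF_D (4 * p) p hp ⟨4, by ring⟩
  have hp2 := isMF_D (4 * p) (2 * p) (by omega) ⟨2, by ring⟩
  have := ((((h1.pow 3).mul h4).pow (2 * W - i - j)).mul (h2.pow (2 * (i + j)))).mul
    ((hp1.pow (2 * i)).mul (hp2.pow (2 * j)))
  convert this using 1
  · omega
  · rfl

/-- A combination of the forms `trm` whose Taylor coefficients vanish up to Sturm's bound is
zero on the punctured disc. -/
lemma comb_vanish (W p : ℕ) (hp : p.Prime) (hp2 : p ≠ 2) (B : ℕ)
    (hB : 96 * W * (16 * (p + 1)) < 12 * B) {ι : Type} [Fintype ι] (b : ι → ℂ) (i j : ι → ℕ)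
    (hi : ∀ t, i t < W) (hj : ∀ t, j t < W) (e : ι → ℕ → ℤ)
    (he : ∀ t, PSer (fun n => (e t n : ℂ)) (trm W (i t) (j t) p))
    (h0 : ∀ m < B, ∑ t, b t * (e t m : ℂ) = 0) (z : ℂ) (hz0 : z ≠ 0) (hz : ‖z‖ < 1) :
    ∑ t, b t * trm W (i t) (j t) p z = 0 := by
  have hser : PSer (fun n => ∑ t, b t * (e t n : ℂ)) (fun z => ∑ t, b t * trm W (i t) (j t) p z) := by
    intro z hz
    have := hasSum_sum (s := Finset.univ) (fun t _ => (he t z hz).mul_left (b t))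
    have h4 : ∀ (u v : ℕ → ℂ) (S : ℂ), u = v → HasSum v S → HasSum u S :=
      fun u v S h => h ▸ fun h => h
    refine h4 _ _ _ (funext fun n => ?_) this
    simp only []
    rw [Finset.sum_mul]
    exact Finset.sum_congr rfl fun t _ => by ring
  obtain ⟨g, hg, hfg⟩ := hser.shift h0
  have hmf : IsMF (4 * p) (96 * W)
      (fun τ => ∑ t, b t * trm W (i t) (j t) p (Function.Periodic.qParam 1 τ)) := by
    have := IsMF.sum (N := 4 * p) (k := 96 * W) Finset.univ
      (fun t => fun τ : ℍ => b t * trm W (i t) (j t) p (Function.Periodic.qParam 1 τ))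
      (fun t _ => (isMF_trm W (hi t) (hj t) hp.ne_zero).smul (b t))
    convert this using 1
    ext τ
    simp only [Finset.sum_apply]
  have hq1 : ∀ τ : ℍ, ‖Function.Periodic.qParam 1 τ‖ < 1 := fun τ =>
    by simpa using UpperHalfPlane.norm_qParam_lt_one 1 τ
  have hO : (fun τ : ℍ => ∑ t, b t * trm W (i t) (j t) p (Function.Periodic.qParam 1 τ))
      =O[atImInfty] (fun τ => Function.Periodic.qParam 1 τ ^ B) := by
    have hlim : Filter.Tendsto (fun τ : ℍ => Function.Periodic.qParam 1 τ) atImInfty (nhds 0) :=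
      (Function.Periodic.qParam_tendsto one_pos).mono_right nhdsWithin_le_nhds |>.comp
        UpperHalfPlane.tendsto_coe_atImInfty
    have hgc : ContinuousAt g 0 :=
      (hg.differentiableOn.differentiableAt (Metric.ball_mem_nhds _ one_pos)).continuousAt
    have hgb : (fun τ : ℍ => g (Function.Periodic.qParam 1 τ)) =O[atImInfty] (fun _ => (1 : ℂ)) :=
      (hgc.tendsto.comp hlim).isBigO_one ℂ
    have := (Asymptotics.isBigO_refl (fun τ : ℍ => Function.Periodic.qParam 1 τ ^ B) atImInfty).mul hgb
    simp only [mul_one] at this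
    refine this.congr_left fun τ => ?_
    exact (hfg _ (hq1 τ)).symm
  have := sturm p hp hp2 _ _ hmf B hB hO
  have him := Function.Periodic.im_invQParam_pos_of_norm_lt_one one_pos hz hz0
  have h1 := congrFun this ⟨_, him⟩
  have hq : Function.Periodic.qParam 1 (⟨_, him⟩ : ℍ) = z :=
    Function.Periodic.qParam_right_inv one_ne_zero hz0
  simp only [hq] at h1
  exact h1

end

/-! ### Construction of the auxiliary function -/

section

/-- Up to factors independent of `i, j, l`, the term of index `(l, i, j)` of `Fun` at `q₀ ^ k` is a
monomial in `q₀` and `cc` times a modular form at `q₀`. -/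
lemma trm_q0 (W i j k l : ℕ) (hi : i < W) (hj : j < W) :
    (q0 : ℂ) ^ (k * l) * cc ^ (i + j) * trm W i j k (q0 : ℂ) =
      cc ^ (2 * W) * D ((q0 : ℂ) ^ 2) ^ (4 * W) * (((q0 : ℂ) ^ k) ^ l *
        (D ((q0 : ℂ) ^ k) ^ (2 * i) * D (((q0 : ℂ) ^ k) ^ 2) ^ (2 * j))) := by
  have hX : D ((q0 : ℂ) ^ 2) ≠ 0 := D_q0_pow_ne 2 (by norm_num)
  have h1 : D (q0 : ℂ) ^ 3 * D ((q0 : ℂ) ^ 4) = cc * D ((q0 : ℂ) ^ 2) ^ 2 := by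
    rw [cc]; field_simp
  rw [trm, h1, show (q0 : ℂ) ^ (2 * k) = ((q0 : ℂ) ^ k) ^ 2 by rw [← pow_mul, mul_comm],
    show 2 * W = (i + j) + (2 * W - i - j) by omega,
    show 4 * W = 2 * (2 * W - i - j) + 2 * (i + j) by omega,
    show i + j + (2 * W - i - j) - i - j = 2 * W - i - j by omega]
  rw [pow_add cc, pow_add (D _), mul_pow, pow_mul (q0 : ℂ), pow_mul (D ((q0:ℂ)^2)) 2]
  ring

/-- If `cc` is algebraic, Siegel's lemma gives a nonzero auxiliary function with coefficients of
size `exp (O(s⁵))` which vanishes at `q₀ ^ p` for all odd primes `p ≤ s³`. -/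
lemma exists_a (hcc : IsAlgebraic ℚ cc) : ∃ (C : ℝ) (s0 : ℕ), 1 ≤ C ∧ 2 ≤ s0 ∧ ∀ s ≥ s0,
    ∃ a : Fin (s ^ 4) × Fin (s ^ 4) × Fin (s ^ 4) → ℤ, a ≠ 0 ∧
      (∀ t, |(a t : ℝ)| ≤ Real.exp (C * s ^ 5)) ∧
      ∀ p : ℕ, p.Prime → p ≠ 2 → p ≤ s ^ 3 → Fun (s ^ 4) a ((q0 : ℂ) ^ p) = 0 := by
  have hcc' : IsAlgebraic ℤ cc := (IsFractionRing.isAlgebraic_iff ℤ ℚ ℂ).2 hcc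
  obtain ⟨D0, hD0, hDcint⟩ := hcc'.exists_integral_multiple
  rw [zsmul_eq_mul] at hDcint
  obtain ⟨d, A, hA, hd, hS⟩ := siegel_alg isIntegral_q0 hDcint
  obtain ⟨C0, hC0, hg⟩ := D_growth
  have hD1 : (1 : ℝ) ≤ |(D0 : ℝ)| := by exact_mod_cast Int.one_le_abs hD0
  set C1 : ℝ := 2 * Real.log |(D0 : ℝ)| + 4 + 8 * Real.log C0 + 48 * 600 with hC1
  have hl1 : 0 ≤ Real.log |(D0 : ℝ)| := Real.log_nonneg hD1
  have hl2 : 0 ≤ Real.log C0 := Real.log_nonneg hC0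
  have hl3 : 0 ≤ Real.log A := Real.log_nonneg (by exact_mod_cast hA)
  have hd1 : (1 : ℝ) ≤ d := by exact_mod_cast hd
  refine ⟨(C1 + 3 * Real.log A + 12) * (1024 * d), 1024 * d + 1, ?_, by omega, fun s hs => ?_⟩
  · nlinarith
  have hs1 : 1 ≤ s := by omega
  have hsR : (1 : ℝ) ≤ s := by exact_mod_cast hs1
  have hls : Real.log s ≤ s := (Real.log_le_sub_one_of_pos (by linarith)).trans (by linarith)
  set W := s ^ 4 with hW
  set K0 := s ^ 3 with hK0
  -- `B` exceeds the Sturm bound for weight `96 W` on `Γ₀(4 p)` for each `p ≤ K0`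
  set B := 512 * W * K0 with hB
  have hW1 : 1 ≤ W := Nat.one_le_pow _ _ hs1
  have hK1 : 1 ≤ K0 := Nat.one_le_pow _ _ hs1
  have hBpos : 0 < B := by positivity
  haveI : NeZero K0 := ⟨by omega⟩
  haveI : NeZero B := ⟨by omega⟩
  -- the last index is shifted by one, so that it runs over `Fin K0`
  choose e he using fun (i j k : ℕ) => intSer_trm W i j (k := k + 1) (by omega)
  have hebound : ∀ (i j k m : ℕ), i < W → j < W → m < B →
      |(e i j k m : ℝ)| ≤ 4 * C0 ^ (8 * W) * ((B : ℝ) + 2) ^ (48 * W) := by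
    intro i j k m hi hj hm
    have := (he i j k).coeff_bound (A := C0 ^ (8 * W)) (by positivity) (n := 48 * W)
      (fun z hz => trm_growth hC0 hg W hi hj (by omega) hz) m
    rw [Complex.norm_intCast] at this
    refine this.trans ?_
    gcongr
  set T : ℝ := C1 * s ^ 5 with hT
  have hC1nn : 0 ≤ C1 := by positivity
  have hTnn : 0 ≤ T := by positivity
  have hWR : (W : ℝ) = s ^ 4 := by rw [hW]; push_cast; ring
  have hBR : (B : ℝ) = 512 * s ^ 7 := by rw [hB, hW, hK0]; push_cast; ring
  have hlB : Real.log ((B : ℝ) + 2) ≤ 600 * s := by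
    have h1 : (1 : ℝ) ≤ s ^ 7 := one_le_pow₀ hsR
    have h2 : (B : ℝ) + 2 ≤ 514 * s ^ 7 := by rw [hBR]; linarith
    have h3 : Real.log ((B : ℝ) + 2) ≤ Real.log (514 * (s : ℝ) ^ 7) :=
      Real.log_le_log (by positivity) h2
    rw [Real.log_mul (by norm_num) (by positivity), Real.log_pow] at h3
    have h4 : Real.log 514 ≤ 513 := by
      have := Real.log_le_sub_one_of_pos (show (0 : ℝ) < 514 by norm_num)
      linarith
    push_cast at h3
    linarith
  have hs45 : (s : ℝ) ^ 4 ≤ s ^ 5 := pow_le_pow_right₀ hsR (by norm_num)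
  have hs15 : (1 : ℝ) ≤ s ^ 5 := one_le_pow₀ hsR
  have hTexp : |(D0 : ℝ)| ^ (2 * W) * (4 * C0 ^ (8 * W) * ((B : ℝ) + 2) ^ (48 * W)) ≤
      Real.exp T := by
    rw [← Real.log_le_iff_le_exp (by positivity), Real.log_mul (by positivity) (by positivity),
      Real.log_mul (by positivity) (by positivity), Real.log_mul (by positivity) (by positivity),
      Real.log_pow, Real.log_pow, Real.log_pow]
    push_cast
    rw [hWR, hT, hC1]
    have h4 : Real.log 4 ≤ 4 := by
      have := Real.log_le_sub_one_of_pos (show (0 : ℝ) < 4 by norm_num)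
      linarith
    have e1 : (s : ℝ) ^ 4 * Real.log |(D0 : ℝ)| ≤ s ^ 5 * Real.log |(D0 : ℝ)| := by gcongr
    have e2 : (s : ℝ) ^ 4 * Real.log C0 ≤ s ^ 5 * Real.log C0 := by gcongr
    have e3 : (s : ℝ) ^ 4 * Real.log ((B : ℝ) + 2) ≤ s ^ 4 * (600 * s) := by gcongr
    nlinarith
  -- the equations say that the first `B` coefficients of the `K0` interpolating forms vanish;
  -- multiplying by `D0 ^ (2 W)` turns powers of `cc` into powers of the integer `D0 * cc`
  obtain ⟨a, ha0, hab, haz⟩ := hS (Fin K0 × Fin B) (Fin W × Fin W × Fin W)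
    (fun x t => D0 ^ (2 * W - t.2.1 - t.2.2) * e t.2.1 t.2.2 x.1 x.2)
    (fun x t => (x.1 + 1) * t.1) (fun x t => t.2.1 + t.2.2) T (K0 * W + 2 * W) hTnn
    (fun x t => by
      have h1 : ((x.1 : ℕ) + 1) * t.1 ≤ K0 * W := Nat.mul_le_mul (by omega) (by omega)
      have := t.2.1.2
      have := t.2.2.2
      omega)
    (fun x t => by
      refine le_trans ?_ hTexp
      push_cast
      rw [abs_mul, abs_pow]
      have := hebound t.2.1 t.2.2 x.1 x.2 t.2.1.2 t.2.2.2 x.2.2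
      have h3 : |(D0 : ℝ)| ^ (2 * W - t.2.1 - t.2.2 : ℕ) ≤ |(D0 : ℝ)| ^ (2 * W) :=
        pow_le_pow_right₀ hD1 (by omega)
      gcongr)
    (by
      simp only [Fintype.card_prod, Fintype.card_fin]
      have h2 : 1024 * d ≤ s ^ 2 := by nlinarith
      calc 2 * (d * (K0 * B)) = 1024 * d * s ^ 10 := by rw [hB, hK0, hW]; ring
        _ ≤ s ^ 2 * s ^ 10 := Nat.mul_le_mul_right _ h2
        _ = _ := by rw [hW]; ring)
  refine ⟨a, ha0, fun t => (hab t).trans ?_, fun p hp hp2 hpK => ?_⟩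
  · apply Real.exp_le_exp.2
    simp only [Fintype.card_prod, Fintype.card_fin]
    have hK0R : (K0 : ℝ) = s ^ 3 := by rw [hK0]; push_cast; ring
    push_cast
    rw [hBR, hWR, hK0R]
    have hs0 : (s : ℝ) ≠ 0 := by positivity
    have e1 : 2 * ((d : ℝ) * (s ^ 3 * (512 * s ^ 7))) / (s ^ 4 * (s ^ 4 * s ^ 4)) =
        1024 * d / s ^ 2 := by field_simp; ring
    have e2 : Real.log ((s : ℝ) ^ 4 * (s ^ 4 * s ^ 4)) ≤ 12 * s := by
      rw [show (s : ℝ) ^ 4 * (s ^ 4 * s ^ 4) = s ^ 12 by ring, Real.log_pow]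
      push_cast; linarith
    rw [e1]
    have e3 : (s : ℝ) ^ 5 ≤ s ^ 7 := pow_le_pow_right₀ hsR (by norm_num)
    have e4 : (s : ℝ) ≤ s ^ 7 := by
      simpa using pow_le_pow_right₀ hsR (show 1 ≤ 7 by norm_num)
    have e5 : (s : ℝ) ^ 4 ≤ s ^ 7 := pow_le_pow_right₀ hsR (by norm_num)
    calc _ ≤ (C1 * s ^ 7 + (s ^ 7 + 2 * s ^ 7) * Real.log A + 12 * s ^ 7) * (1024 * d / s ^ 2) := by
          rw [hT, show (s : ℝ) ^ 3 * s ^ 4 = s ^ 7 by ring]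
          gcongr
          exact e2.trans (by linarith)
      _ = _ := by field_simp; ring
  · have hp1 : 1 ≤ p := hp.one_lt.le
    have hk : p - 1 + 1 = p := by omega
    have key := comb_vanish W p hp hp2 B (by
        rw [hB]
        have : W * p ≤ W * K0 := Nat.mul_le_mul_left _ hpK
        have h3 : W * 1 ≤ W * K0 := Nat.mul_le_mul_left _ hK1
        nlinarith)
      (fun t : Fin W × Fin W × Fin W => (a t : ℂ) * ((D0 : ℂ) ^ (2 * W) *
        ((q0 : ℂ) ^ (p * t.1) * cc ^ (t.2.1 + t.2.2 : ℕ))))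
      (fun t => t.2.1) (fun t => t.2.2) (fun t => t.2.1.2) (fun t => t.2.2.2)
      (fun t => e t.2.1 t.2.2 (p - 1))
      (fun t => by simpa only [hk] using he t.2.1 t.2.2 (p - 1))
      (fun m hm => by
        have := haz (⟨p - 1, by omega⟩, ⟨m, hm⟩)
        simp only [hk] at this
        rw [← this]
        refine Finset.sum_congr rfl fun t _ => ?_
        have hi := t.2.1.2
        have hj := t.2.2.2
        rw [show (D0 : ℂ) ^ (2 * W) = (D0 : ℂ) ^ (2 * W - t.2.1 - t.2.2 : ℕ) *
          (D0 : ℂ) ^ (t.2.1 + t.2.2 : ℕ) by rw [← pow_add]; congr 1; omega, mul_pow]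
        push_cast
        ring) (q0 : ℂ) (by exact_mod_cast q0_pos.ne') (by simpa using norm_q0_pow_lt 1 one_ne_zero)
    have h5 : ∑ t : Fin W × Fin W × Fin W, (a t : ℂ) * ((D0 : ℂ) ^ (2 * W) *
        ((q0 : ℂ) ^ (p * t.1) * cc ^ (t.2.1 + t.2.2 : ℕ))) * trm W t.2.1 t.2.2 p (q0 : ℂ) =
        (D0 : ℂ) ^ (2 * W) * (cc ^ (2 * W) * D ((q0 : ℂ) ^ 2) ^ (4 * W)) *
          Fun W a ((q0 : ℂ) ^ p) := by
      rw [Fun, Finset.mul_sum]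
      refine Finset.sum_congr rfl fun t _ => ?_
      have := trm_q0 W t.2.1 t.2.2 p t.1 t.2.1.2 t.2.2.2
      linear_combination (a t : ℂ) * (D0 : ℂ) ^ (2 * W) * this
    rw [h5] at key
    have hne : (D0 : ℂ) ^ (2 * W) * (cc ^ (2 * W) * D ((q0 : ℂ) ^ 2) ^ (4 * W)) ≠ 0 := by
      refine mul_ne_zero (pow_ne_zero _ (by exact_mod_cast hD0)) (mul_ne_zero (pow_ne_zero _ cc_ne)
        (pow_ne_zero _ (D_q0_pow_ne 2 (by norm_num))))
    exact (mul_eq_zero.1 key).resolve_left hne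

end

/-! ### Exponential polynomials on a grid -/

section

open Polynomial

/-- The shift operator on real sequences. -/
def shiftE : Module.End ℝ (ℕ → ℝ) where
  toFun b n := b (n + 1)
  map_add' _ _ := rfl
  map_smul' _ _ := rfl

lemma aeval_shiftE_X_sub_C (μ : ℝ) (b : ℕ → ℝ) (n : ℕ) :
    aeval shiftE (X - C μ) b n = b (n + 1) - μ * b n := by
  simp [shiftE, Module.algebraMap_end_apply]

/-- A solution of a linear recurrence whose characteristic roots lie in the interval `[-1, 1]` grows
only polynomially, with a degree equal to the order of the recurrence. -/
lemma rec_bound (l : List ℝ) (hl : ∀ μ ∈ l, |μ| ≤ 1) (b : ℕ → ℝ) (δ : ℝ) (hδ : 0 ≤ δ)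
    (h0 : aeval shiftE (l.map (fun μ => X - C μ)).prod b = 0)
    (hb : ∀ m < l.length, |b m| ≤ δ) (m : ℕ) : |b m| ≤ δ * (2 * ((m : ℝ) + 1)) ^ l.length := by
  induction l generalizing b δ m with
  | nil =>
    have : b = 0 := by simpa using h0
    simp [this, hδ]
  | cons μ l ih =>
    have hμ : |μ| ≤ 1 := hl μ (by simp)
    set c := aeval shiftE (X - C μ) b with hc
    have hcn : ∀ n, c n = b (n + 1) - μ * b n := aeval_shiftE_X_sub_C μ b
    have hc0 : aeval shiftE (l.map (fun μ => X - C μ)).prod c = 0 := by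
      rw [hc, ← Module.End.mul_apply, ← map_mul, mul_comm]
      simpa using h0
    have hcb := ih (fun μ h => hl μ (by simp [h])) c (2 * δ) (by positivity) hc0 (fun m hm => by
      rw [hcn]
      have h1 := hb (m + 1) (by simpa using hm)
      have h2 := hb m (by simp; omega)
      have h3 : |μ * b m| ≤ δ := by
        rw [abs_mul]
        calc _ ≤ 1 * δ := by gcongr
          _ = δ := one_mul _
      calc _ ≤ |b (m + 1)| + |μ * b m| := abs_sub _ _
        _ ≤ _ := by linarith)
    have key : ∀ m : ℕ, |b m| ≤ δ * (1 + m * (2 * (2 * (m : ℝ)) ^ l.length)) := by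
      intro m
      induction m with
      | zero => simpa using hb 0 (by simp)
      | succ m ihm =>
        have e1 : b (m + 1) = c m + μ * b m := by rw [hcn]; ring
        have h3 : |μ * b m| ≤ |b m| := by
          rw [abs_mul]
          calc _ ≤ 1 * |b m| := by gcongr
            _ = _ := one_mul _
        have h4 := hcb m
        have h5 : (2 * (m : ℝ)) ^ l.length ≤ (2 * ((m : ℝ) + 1)) ^ l.length := by
          gcongr; linarith
        calc |b (m + 1)| ≤ |c m| + |μ * b m| := by rw [e1]; exact abs_add_le _ _
          _ ≤ 2 * δ * (2 * ((m : ℝ) + 1)) ^ l.length +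
              δ * (1 + m * (2 * (2 * ((m : ℝ) + 1)) ^ l.length)) := by
              refine add_le_add h4 (h3.trans (ihm.trans ?_))
              gcongr
          _ = _ := by push_cast; ring
    refine (key m).trans ?_
    refine mul_le_mul_of_nonneg_left ?_ hδ
    rw [List.length_cons, pow_succ]
    have h5 : (2 * (m : ℝ)) ^ l.length ≤ (2 * ((m : ℝ) + 1)) ^ l.length := by
      gcongr; linarith
    have h6 : (1 : ℝ) ≤ (2 * ((m : ℝ) + 1)) ^ l.length := one_le_pow₀ (by
      have : (0 : ℝ) ≤ m := by positivity
      linarith)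
    have hm0 : (0 : ℝ) ≤ m := by positivity
    nlinarith

lemma shiftE_pow_kill (μ : ℝ) (g : ℕ → ℝ) (n : ℕ) :
    aeval shiftE ((X - C μ) ^ n) (fun m => μ ^ m * g m) =
      fun m => μ ^ (m + n) * (fwdDiff 1)^[n] g m := by
  induction n with
  | zero => ext m; simp
  | succ n ih =>
    rw [pow_succ', map_mul, Module.End.mul_apply, ih]
    ext m
    rw [aeval_shiftE_X_sub_C, Function.iterate_succ_apply', fwdDiff]
    ring

/-- `μ ^ m g(m)` with `deg g < n` satisfies the recurrence with characteristic polynomial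
`(X - μ) ^ n`. -/
lemma shiftE_pow_kill_poly (μ : ℝ) (g : ℝ[X]) (n : ℕ) (hn : g.natDegree < n) :
    aeval shiftE ((X - C μ) ^ n) (fun m => μ ^ m * g.eval (m : ℝ)) = 0 := by
  rw [shiftE_pow_kill μ (fun m => g.eval (m : ℝ))]
  have h1 : ∀ k : ℕ, (fwdDiff 1)^[k] (fun m : ℕ => g.eval (m : ℝ)) =
      fun m : ℕ => (fwdDiff (1 : ℝ))^[k] (fun x : ℝ => g.eval x) (m : ℝ) := by
    intro k
    induction k with
    | zero => rfl
    | succ k ih =>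
      rw [Function.iterate_succ_apply', ih]
      ext m
      rw [Function.iterate_succ_apply', fwdDiff, fwdDiff]
      push_cast; rfl
  ext m
  rw [h1, fwdDiff_iter_eq_zero_of_degree_lt hn]
  simp

/-- An exponential polynomial which is small at the first `W (d + 1)` points of a grid cannot be
large later on. -/
lemma expPoly_bound (W d : ℕ) (p : ℕ → ℝ[X]) (hp : ∀ l < W, (p l).natDegree ≤ d) (R : ℝ) (hR : 0 < R)
    (y0 δ : ℝ) (hδ : 0 ≤ δ) (Q : ℝ → ℝ)
    (hQ : ∀ y, Q y = ∑ l ∈ Finset.range W, Real.exp (-2 * Real.pi * l * y) * (p l).eval y)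
    (hb : ∀ m < W * (d + 1), |Q (y0 + m / R)| ≤ δ) (m : ℕ) :
    |Q (y0 + m / R)| ≤ δ * (2 * ((m : ℝ) + 1)) ^ (W * (d + 1)) := by
  set μ : ℕ → ℝ := fun l => Real.exp (-2 * Real.pi * l / R) with hμ
  set L : List ℝ := (List.range W).flatMap (fun l => List.replicate (d + 1) (μ l)) with hL
  have hlen : L.length = W * (d + 1) := by simp [hL]
  have hprod : (L.map (fun μ => (X - C μ : ℝ[X]))).prod =
      ∏ l ∈ Finset.range W, (X - C (μ l)) ^ (d + 1) := by
    rw [hL]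
    clear_value μ
    clear hlen hL L hb hQ hp
    induction W with
    | zero => simp
    | succ W ih => simp [List.range_succ, List.flatMap_append, ih, Finset.prod_range_succ]
  rw [← hlen] at hb ⊢
  refine rec_bound L ?_ (fun m : ℕ => Q (y0 + m / R)) δ hδ ?_ hb m
  · intro x hx
    simp only [hL, List.mem_flatMap, List.mem_replicate] at hx
    obtain ⟨l, -, -, rfl⟩ := hx
    rw [hμ, abs_of_pos (Real.exp_pos _)]
    apply Real.exp_le_one_iff.2
    have : 0 ≤ Real.pi * l / R := by positivity
    have e : -2 * Real.pi * l / R = -2 * (Real.pi * l / R) := by ring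
    rw [e]; linarith
  · have e1 : (fun m : ℕ => Q (y0 + m / R)) = ∑ l ∈ Finset.range W, (fun m : ℕ => (μ l) ^ m *
        (C (Real.exp (-2 * Real.pi * l * y0)) * (p l).comp (C y0 + C R⁻¹ * X)).eval (m : ℝ)) := by
      ext m
      rw [hQ, Finset.sum_apply]
      refine Finset.sum_congr rfl fun l _ => ?_
      simp only [eval_mul, eval_C, eval_comp, eval_add, eval_X, hμ]
      rw [← Real.exp_nat_mul, ← mul_assoc, ← Real.exp_add]
      congr 2
      · field_simp; ring
      · field_simp
    rw [e1, map_sum, hprod]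
    refine Finset.sum_eq_zero fun l hl => ?_
    rw [← Finset.prod_erase_mul _ _ hl, map_mul, Module.End.mul_apply, shiftE_pow_kill_poly, map_zero]
    refine Nat.lt_succ_of_le (le_trans ?_ (hp l (Finset.mem_range.1 hl)))
    refine (natDegree_C_mul_le _ _).trans (natDegree_comp_le.trans ?_)
    have : (C y0 + C R⁻¹ * X : ℝ[X]).natDegree ≤ 1 := by
      rw [add_comm]; exact natDegree_linear_le
    nlinarith

end

/-! ### The auxiliary function near the cusp -/

section

open Real

lemma Fun_bound {C : ℝ} (hC : 1 ≤ C)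
    (h : ∀ z : ℂ, ‖z‖ < 1 → ‖D z‖ ≤ C * (1 / (1 - ‖z‖)) ^ 6) (W : ℕ)
    (a : Fin W × Fin W × Fin W → ℤ) {A0 : ℝ} (ha : ∀ t, |(a t : ℝ)| ≤ A0) {z : ℂ} (hz : ‖z‖ < 1) :
    ‖Fun W a z‖ ≤ (W : ℝ) ^ 3 * A0 * (C ^ (4 * W) * (1 / (1 - ‖z‖)) ^ (24 * W)) := by
  set X := C * (1 / (1 - ‖z‖)) ^ 6 with hX
  have h1z : 0 < 1 - ‖z‖ := by linarith
  have hX1 : 1 ≤ X := by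
    have : 1 ≤ 1 / (1 - ‖z‖) := by rw [le_div_iff₀ h1z]; linarith [norm_nonneg z]
    exact one_le_mul_of_one_le_of_one_le hC (one_le_pow₀ this)
  have hX0 : 0 ≤ X := by linarith
  have h1 : ‖D z‖ ≤ X := h z hz
  have h2 := D_pow_growth hC h hz (d := 2) (by norm_num)
  rw [← hX] at h2
  have h3 : ∀ t : Fin W × Fin W × Fin W, ‖(a t : ℂ) * (z ^ (t.1 : ℕ) *
      (D z ^ (2 * t.2.1 : ℕ) * D (z ^ 2) ^ (2 * t.2.2 : ℕ)))‖ ≤ A0 * X ^ (4 * W) := by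
    intro t
    have hA0 : 0 ≤ A0 := (abs_nonneg _).trans (ha t)
    simp only [norm_mul, norm_pow, Complex.norm_intCast]
    calc _ ≤ A0 * (1 * (X ^ (2 * t.2.1 : ℕ) * X ^ (2 * t.2.2 : ℕ))) := by
          gcongr
          · exact ha t
          · exact pow_le_one₀ (norm_nonneg _) hz.le
      _ ≤ _ := by
          rw [one_mul, ← pow_add]
          have := t.2.1.2
          have := t.2.2.2
          exact mul_le_mul_of_nonneg_left (pow_le_pow_right₀ hX1 (by omega)) hA0
  calc _ ≤ ∑ t : Fin W × Fin W × Fin W, A0 * X ^ (4 * W) := norm_sum_le_of_le _ fun t _ => h3 t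
    _ = (W : ℝ) ^ 3 * A0 * X ^ (4 * W) := by
        simp [Fintype.card_prod]; ring
    _ = _ := by rw [hX, mul_pow, ← pow_mul]; congr 3; ring

/-- A high order of vanishing of `Fun` at `0` makes its values near the boundary small (Schwarz's
lemma on a circle of radius `r` with `e^(-2π y) = r²`). -/
lemma Fun_small {C : ℝ} (hC : 1 ≤ C)
    (h : ∀ z : ℂ, ‖z‖ < 1 → ‖D z‖ ≤ C * (1 / (1 - ‖z‖)) ^ 6) (W : ℕ)
    (a : Fin W × Fin W × Fin W → ℤ) {A0 : ℝ} (hA0 : 0 ≤ A0) (ha : ∀ t, |(a t : ℝ)| ≤ A0)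
    {α : ℕ → ℂ} (hα : PSer α (Fun W a)) {M : ℕ} (hM : ∀ n < M, α n = 0) {y : ℝ} (hy : 0 < y)
    (hy1 : y ≤ 1) :
    ‖Fun W a ((exp (-2 * π * y) : ℝ) : ℂ)‖ ≤
      exp (-π * y * M) * ((W : ℝ) ^ 3 * A0 * (C ^ (4 * W) * (2 / y) ^ (24 * W))) := by
  obtain ⟨g, hg, hfg⟩ := hα.shift hM
  set r := exp (-π * y) with hr
  have hr0 : 0 < r := exp_pos _
  have hyp : 0 < π * y := by positivity
  have hr1 : r < 1 := by rw [hr]; apply Real.exp_lt_one_iff.2; linarith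
  have hx : exp (-2 * π * y) = r * r := by rw [hr, ← exp_add]; congr 1; ring
  have hnx : ‖((exp (-2 * π * y) : ℝ) : ℂ)‖ = r * r := by
    rw [Complex.norm_real, norm_of_nonneg (exp_pos _).le, hx]
  have hxr : r * r ≤ r := by nlinarith
  have h1r : y / 2 ≤ 1 - r := by
    have h1 := add_one_le_exp (π * y)
    have h2 : r * exp (π * y) = 1 := by rw [hr, ← exp_add]; simp
    have h3 := pi_gt_three
    have h4 : r * (π * y + 1) ≤ 1 := by
      calc _ ≤ r * exp (π * y) := by gcongr
        _ = 1 := h2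
    by_contra hcon
    push Not at hcon
    have h5 : 1 - y / 2 < r := by linarith
    have h6 : (1 - y / 2) * (π * y + 1) < 1 := lt_of_lt_of_le (by gcongr) h4
    nlinarith
  have hb : ∀ z : ℂ, ‖z‖ = r → ‖g z‖ ≤
      ((W : ℝ) ^ 3 * A0 * (C ^ (4 * W) * (2 / y) ^ (24 * W))) / r ^ M := by
    intro z hz
    rw [le_div_iff₀ (by positivity)]
    have h1 := Fun_bound hC h W a ha (z := z) (by rw [hz]; exact hr1)
    rw [hfg z (by rw [hz]; exact hr1), norm_mul, norm_pow, hz] at h1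
    rw [mul_comm]
    refine h1.trans ?_
    have h2 : 1 / (1 - r) ≤ 2 / y := by
      rw [div_le_div_iff₀ (by linarith) hy]; linarith
    have h3 : 0 < 1 - r := by linarith
    gcongr
  have h2 := hg.norm_le hr0 hr1 hb (z := ((exp (-2 * π * y) : ℝ) : ℂ)) (by rw [hnx]; exact hxr)
  rw [hfg _ (by rw [hnx]; linarith), norm_mul, norm_pow, hnx]
  calc _ ≤ (r * r) ^ M * (((W : ℝ) ^ 3 * A0 * (C ^ (4 * W) * (2 / y) ^ (24 * W))) / r ^ M) := by
        gcongr
    _ = r ^ M * ((W : ℝ) ^ 3 * A0 * (C ^ (4 * W) * (2 / y) ^ (24 * W))) := by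
        rw [mul_pow]; field_simp
    _ = _ := by rw [hr, ← exp_nat_mul]; congr 2; ring

/-- The values of `D` at `e^(-2π y)` and its square, for small `y`: the leading terms come from
`e^(-2π / y)` and `e^(-2π / (2 y))` respectively, `u` and `v` being correction factors close to `1`. -/
lemma D_S_pair {y : ℝ} (hy : 0 < y) (hy1 : y ≤ 1) : ∃ u v : ℝ, 0 ≤ u ∧ u ≤ 1 ∧ 0 ≤ v ∧ v ≤ 1 ∧
    1 - u ≤ 48 * exp (-π / y) ∧ 1 - v ≤ 48 * exp (-π / y) ∧
    D ((exp (-2 * π * y) : ℝ) : ℂ) = ((exp (-π / y) ^ 2 * u / y ^ 12 : ℝ) : ℂ) ∧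
    D (((exp (-2 * π * y) : ℝ) : ℂ) ^ 2) = ((exp (-π / y) * v / (2 * y) ^ 12 : ℝ) : ℂ) := by
  set ε := exp (-π / y) with hε
  have hε0 : 0 < ε := exp_pos _
  have hε1 : ε ≤ 1 / 2 := by
    have h1 : ε ≤ exp (-1) := by
      apply exp_le_exp.2
      rw [div_le_iff₀ hy]; nlinarith [pi_gt_three]
    have h2 := exp_neg_one_lt_d9
    linarith
  have hεε : ε ^ 2 ≤ ε := by nlinarith
  have e1 : exp (-2 * π / y) = ε ^ 2 := by rw [hε, ← exp_nat_mul]; congr 1; push_cast; ring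
  have e2 : exp (-2 * π / (2 * y)) = ε := by rw [hε]; congr 1; field_simp
  obtain ⟨u, hu, hu0, hu1, hu2⟩ := D_real (x := ε ^ 2) (by positivity) (by linarith)
  obtain ⟨v, hv, hv0, hv1, hv2⟩ := D_real (x := ε) hε0 hε1
  refine ⟨u, v, hu0, hu1, hv0, hv1, by linarith, hv2, ?_, ?_⟩
  · rw [D_S hy, e1, hu]; push_cast; ring
  · have e3 : ((exp (-2 * π * y) : ℝ) : ℂ) ^ 2 = ((exp (-2 * π * (2 * y)) : ℝ) : ℂ) := by
      rw [← Complex.ofReal_pow, ← exp_nat_mul]; congr 2; push_cast; ring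
    rw [e3, D_S (by positivity), e2, hv]; push_cast; ring

/-- The part of `(2 y²)^(24 W) e^(2π n₀ / y) Fun(e^(-2π y))` which dominates as `y → 0`,
where `n₀` is the least value of `2 i + j` over the indices of nonzero coefficients. The natural
number subtractions do not truncate since `i, j < W`. -/
noncomputable def Qf (W : ℕ) (a : Fin W × Fin W × Fin W → ℤ) (n0 : ℕ) (y : ℝ) : ℝ :=
  ∑ t : Fin W × Fin W × Fin W, if 2 * (t.2.1 : ℕ) + t.2.2 = n0 then
    (a t : ℝ) * (exp (-2 * π * (t.1 : ℕ) * y) *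
      (y ^ (48 * W - 24 * (t.2.1 + t.2.2) : ℕ) * 2 ^ (24 * (W - t.2.2) : ℕ))) else 0

lemma one_sub_pow_mul_pow_le {u v η : ℝ} (hu0 : 0 ≤ u) (hu1 : u ≤ 1) (hv0 : 0 ≤ v) (hv1 : v ≤ 1)
    (hu : 1 - u ≤ η) (hv : 1 - v ≤ η) (m n : ℕ) : |u ^ m * v ^ n - 1| ≤ (m + n) * η := by
  have hη : 0 ≤ η := by linarith
  have h1 : u ^ m * v ^ n ≤ 1 := mul_le_one₀ (pow_le_one₀ hu0 hu1) (by positivity) (pow_le_one₀ hv0 hv1)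
  have h2 := one_add_mul_le_pow (a := u - 1) (by linarith) m
  have h3 := one_add_mul_le_pow (a := v - 1) (by linarith) n
  have h4 : u ^ m ≤ 1 := pow_le_one₀ hu0 hu1
  have h5 : v ^ n ≤ 1 := pow_le_one₀ hv0 hv1
  simp only [add_sub_cancel] at h2 h3
  rw [abs_le]
  have hm : (m : ℝ) * (1 - u) ≤ m * η := by gcongr
  have hn : (n : ℝ) * (1 - v) ≤ n * η := by gcongr
  constructor
  · nlinarith [mul_nonneg (sub_nonneg.2 h4) (sub_nonneg.2 h5)]
  · have : 0 ≤ ((m : ℝ) + n) * η := by positivity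
    linarith

lemma Qf_bound (W : ℕ) (a : Fin W × Fin W × Fin W → ℤ) {A0 : ℝ}
    (ha : ∀ t, |(a t : ℝ)| ≤ A0) (n0 : ℕ) (hn0 : ∀ t, a t ≠ 0 → n0 ≤ 2 * (t.2.1 : ℕ) + t.2.2)
    {y : ℝ} (hy : 0 < y) (hy1 : y ≤ 1) :
    |Qf W a n0 y| ≤ 2 ^ (24 * W) * exp (2 * n0 * π / y) * ‖Fun W a ((exp (-2 * π * y) : ℝ) : ℂ)‖ +
      (W : ℝ) ^ 3 * A0 * 2 ^ (24 * W) * (192 * W * exp (-π / y)) := by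
  obtain ⟨u, v, hu0, hu1, hv0, hv1, hu, hv, hD1, hD2⟩ := D_S_pair hy hy1
  set ε := exp (-π / y) with hε
  have hε0 : 0 < ε := exp_pos _
  have hε1 : ε ≤ 1 := exp_le_one_iff.2 (by
    rw [neg_div]; have : 0 < π / y := by positivity
    linarith)
  have hεn : exp (2 * n0 * π / y) * ε ^ (2 * n0) = 1 := by
    rw [hε, ← exp_nat_mul, ← exp_add, exp_eq_one_iff]; push_cast; ring
  set c : Fin W × Fin W × Fin W → ℝ := fun t => (a t : ℝ) * (exp (-2 * π * (t.1 : ℕ) * y) *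
      (y ^ (48 * W - 24 * (t.2.1 + t.2.2) : ℕ) * 2 ^ (24 * (W - t.2.2) : ℕ))) with hc
  have hcb : ∀ t, |c t| ≤ A0 * 2 ^ (24 * W) := by
    intro t
    have hA0 : 0 ≤ A0 := (abs_nonneg _).trans (ha t)
    rw [hc]
    simp only [abs_mul]
    rw [abs_of_pos (exp_pos _), abs_of_nonneg (pow_nonneg hy.le _),
      abs_of_nonneg (by positivity : (0 : ℝ) ≤ 2 ^ (24 * (W - t.2.2) : ℕ))]
    have h1 : exp (-2 * π * (t.1 : ℕ) * y) ≤ 1 := exp_le_one_iff.2 (by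
      have : 0 ≤ π * (t.1 : ℕ) * y := by positivity
      linarith)
    have h2 : y ^ (48 * W - 24 * (t.2.1 + t.2.2) : ℕ) ≤ 1 := pow_le_one₀ hy.le hy1
    have h3 : (2 : ℝ) ^ (24 * (W - t.2.2) : ℕ) ≤ 2 ^ (24 * W) :=
      pow_le_pow_right₀ (by norm_num) (by omega)
    calc _ ≤ A0 * (1 * (1 * 2 ^ (24 * W))) := by gcongr; exact ha t
      _ = _ := by ring
  have hFun : Fun W a ((exp (-2 * π * y) : ℝ) : ℂ) = ((∑ t : Fin W × Fin W × Fin W,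
      c t * (ε ^ (2 * (2 * (t.2.1 : ℕ) + t.2.2)) * (u ^ (2 * t.2.1 : ℕ) * v ^ (2 * t.2.2 : ℕ)) /
        (y ^ (48 * W) * 2 ^ (24 * W))) : ℝ) : ℂ) := by
    rw [Fun, hD1, hD2]
    push_cast
    refine Finset.sum_congr rfl fun t _ => ?_
    have hi := t.2.1.2
    have hj := t.2.2.2
    rw [hc]
    have e1 : exp (-2 * π * (t.1 : ℕ) * y) = exp (-2 * π * y) ^ (t.1 : ℕ) := by
      rw [← exp_nat_mul]; congr 1; ring
    have e2 : y ^ (48 * W) = y ^ (48 * W - 24 * (t.2.1 + t.2.2) : ℕ) *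
        (y ^ (24 * t.2.1 : ℕ) * y ^ (24 * t.2.2 : ℕ)) := by
      rw [← pow_add, ← pow_add]; congr 1; omega
    have e3 : (2 : ℝ) ^ (24 * W) = 2 ^ (24 * (W - t.2.2) : ℕ) * 2 ^ (24 * t.2.2 : ℕ) := by
      rw [← pow_add]; congr 1; omega
    have key : (a t : ℝ) * (exp (-2 * π * y) ^ (t.1 : ℕ) * ((ε ^ 2 * u / y ^ 12) ^ (2 * t.2.1 : ℕ) *
        (ε * v / (2 * y) ^ 12) ^ (2 * t.2.2 : ℕ))) =
        (a t : ℝ) * (exp (-2 * π * (t.1 : ℕ) * y) *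
      (y ^ (48 * W - 24 * (t.2.1 + t.2.2) : ℕ) * 2 ^ (24 * (W - t.2.2) : ℕ))) *
      (ε ^ (2 * (2 * (t.2.1 : ℕ) + t.2.2)) * (u ^ (2 * t.2.1 : ℕ) * v ^ (2 * t.2.2 : ℕ)) /
        (y ^ (48 * W) * 2 ^ (24 * W))) := by
      rw [e1, e2, e3]
      have hy0 : y ≠ 0 := hy.ne'
      have e4 : (ε ^ 2 * u / y ^ 12) ^ (2 * t.2.1 : ℕ) =
          ε ^ (2 * (2 * (t.2.1 : ℕ))) * u ^ (2 * t.2.1 : ℕ) / y ^ (24 * t.2.1 : ℕ) := by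
        rw [div_pow, mul_pow, ← pow_mul, ← pow_mul, ← mul_assoc 12]; norm_num
      have e5 : (ε * v / (2 * y) ^ 12) ^ (2 * t.2.2 : ℕ) =
          ε ^ (2 * (t.2.2 : ℕ)) * v ^ (2 * t.2.2 : ℕ) / (2 ^ (24 * t.2.2 : ℕ) * y ^ (24 * t.2.2 : ℕ)) := by
        rw [div_pow, mul_pow, ← pow_mul, ← mul_pow, ← mul_assoc 12, mul_pow 2 y]; norm_num
      rw [e4, e5, mul_add 2, pow_add ε]
      field_simp
    have := congrArg (fun x : ℝ => (x : ℂ)) key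
    dsimp only
    push_cast at this ⊢
    exact this
  set S := ∑ t : Fin W × Fin W × Fin W,
    if 2 * (t.2.1 : ℕ) + t.2.2 < n0 then 0 else c t * (ε ^ (2 * (2 * (t.2.1 : ℕ) + t.2.2 - n0)) *
      (u ^ (2 * t.2.1 : ℕ) * v ^ (2 * t.2.2 : ℕ))) with hS
  have hS1 : |S| ≤ 2 ^ (24 * W) * exp (2 * n0 * π / y) *
      ‖Fun W a ((exp (-2 * π * y) : ℝ) : ℂ)‖ := by
    have h1 : S = y ^ (48 * W) * (2 ^ (24 * W) * exp (2 * n0 * π / y) * ∑ t : Fin W × Fin W × Fin W,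
      c t * (ε ^ (2 * (2 * (t.2.1 : ℕ) + t.2.2)) * (u ^ (2 * t.2.1 : ℕ) * v ^ (2 * t.2.2 : ℕ)) /
        (y ^ (48 * W) * 2 ^ (24 * W)))) := by
      rw [hS, Finset.mul_sum, Finset.mul_sum]
      refine Finset.sum_congr rfl fun t _ => ?_
      split_ifs with hlt
      · have : a t = 0 := by
          by_contra hne
          exact absurd (hn0 t hne) (by omega)
        simp [hc, this]
      · have e1 : ε ^ (2 * (2 * (t.2.1 : ℕ) + t.2.2)) =
            ε ^ (2 * n0) * ε ^ (2 * (2 * (t.2.1 : ℕ) + t.2.2 - n0)) := by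
          rw [← pow_add]; congr 1; omega
        rw [e1]
        generalize exp (2 * n0 * π / y) = X at hεn ⊢
        generalize c t = ct
        have hy0 : y ≠ 0 := hy.ne'
        field_simp
        linear_combination (-ct * u ^ (2 * t.2.1 : ℕ) * v ^ (2 * t.2.2 : ℕ)) * hεn
    rw [hFun, Complex.norm_real, norm_eq_abs, h1, abs_mul, abs_mul,
      abs_of_nonneg (by positivity : (0:ℝ) ≤ 2 ^ (24 * W) * exp (2 * n0 * π / y)),
      abs_of_nonneg (by positivity : (0:ℝ) ≤ y ^ (48 * W))]
    exact mul_le_of_le_one_left (by positivity) (pow_le_one₀ hy.le hy1)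
  have hdiff : |Qf W a n0 y - S| ≤ (W : ℝ) ^ 3 * A0 * 2 ^ (24 * W) * (192 * W * ε) := by
    rw [hS, Qf, ← Finset.sum_sub_distrib]
    have hterm : ∀ t : Fin W × Fin W × Fin W,
        |(if 2 * (t.2.1 : ℕ) + t.2.2 = n0 then c t else 0) -
          (if 2 * (t.2.1 : ℕ) + t.2.2 < n0 then 0 else c t * (ε ^ (2 * (2 * (t.2.1 : ℕ) + t.2.2 - n0)) *
      (u ^ (2 * t.2.1 : ℕ) * v ^ (2 * t.2.2 : ℕ))))| ≤ A0 * 2 ^ (24 * W) * (192 * W * ε) := by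
      intro t
      have hi := t.2.1.2
      have hj := t.2.2.2
      have hA0 : 0 ≤ A0 := (abs_nonneg _).trans (ha t)
      have hW1 : (1 : ℝ) ≤ W := by exact_mod_cast (by omega : 1 ≤ W)
      have hiR : ((t.2.1 : ℕ) : ℝ) ≤ W := by exact_mod_cast hi.le
      have hjR : ((t.2.2 : ℕ) : ℝ) ≤ W := by exact_mod_cast hj.le
      by_cases h1 : 2 * (t.2.1 : ℕ) + t.2.2 = n0
      · rw [if_pos h1, if_neg (by omega), show 2 * (t.2.1 : ℕ) + t.2.2 - n0 = 0 by omega]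
        have h2 := one_sub_pow_mul_pow_le hu0 hu1 hv0 hv1 hu hv (2 * t.2.1) (2 * t.2.2)
        rw [abs_sub_comm, show ∀ x, c t * (ε ^ (2 * 0) * x) - c t = c t * (x - 1) by intro x; ring,
          abs_mul]
        refine mul_le_mul (hcb t) (h2.trans ?_) (abs_nonneg _) (by positivity)
        push_cast
        nlinarith
      · rw [if_neg h1]
        by_cases h2 : 2 * (t.2.1 : ℕ) + t.2.2 < n0
        · rw [if_pos h2]; simp; positivity
        · rw [if_neg h2, zero_sub, abs_neg, abs_mul]
          refine mul_le_mul (hcb t) ?_ (abs_nonneg _) (by positivity)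
          rw [abs_of_nonneg (by positivity)]
          have h3 : ε ^ (2 * (2 * (t.2.1 : ℕ) + t.2.2 - n0)) ≤ ε :=
            pow_le_of_le_one hε0.le hε1 (by omega)
          have h4 : u ^ (2 * t.2.1 : ℕ) * v ^ (2 * t.2.2 : ℕ) ≤ 1 :=
            mul_le_one₀ (pow_le_one₀ hu0 hu1) (by positivity) (pow_le_one₀ hv0 hv1)
          calc _ ≤ ε * 1 := mul_le_mul h3 h4 (by positivity) hε0.le
            _ ≤ _ := by nlinarith
    refine (Finset.abs_sum_le_sum_abs _ _).trans ((Finset.sum_le_sum fun t _ => hterm t).trans ?_)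
    simp [Fintype.card_prod]
    apply le_of_eq; ring
  calc |Qf W a n0 y| = |S + (Qf W a n0 y - S)| := by congr 1; ring
    _ ≤ |S| + |Qf W a n0 y - S| := abs_add_le _ _
    _ ≤ _ := add_le_add hS1 hdiff

end

/-! ### The dominating exponential polynomial -/

section

open Real

/-- The polynomial coefficient of `e^(-2π l y)` in `Qf`. -/
noncomputable def pl (W : ℕ) (a : Fin W × Fin W × Fin W → ℤ) (n0 : ℕ) (l : Fin W) :
    Polynomial ℤ :=
  ∑ t : Fin W × Fin W, if 2 * (t.1 : ℕ) + t.2 = n0 then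
    Polynomial.C (a (l, t) * 2 ^ (24 * (W - t.2) : ℕ)) *
      Polynomial.X ^ (48 * W - 24 * (t.1 + t.2) : ℕ) else 0

lemma pl_natDegree (W : ℕ) (a : Fin W × Fin W × Fin W → ℤ) (n0 : ℕ) (l : Fin W) :
    (pl W a n0 l).natDegree ≤ 48 * W := by
  refine Polynomial.natDegree_sum_le_of_forall_le _ _ fun t _ => ?_
  split_ifs
  · exact (Polynomial.natDegree_C_mul_X_pow_le _ _).trans (by omega)
  · simp

lemma pl_ne_zero (W : ℕ) (a : Fin W × Fin W × Fin W → ℤ) (n0 : ℕ) (l i j : Fin W)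
    (h : 2 * (i : ℕ) + j = n0) (ha : a (l, i, j) ≠ 0) : pl W a n0 l ≠ 0 := by
  intro h0
  have h1 := congrArg (fun P : Polynomial ℤ => P.coeff (48 * W - 24 * (i + j))) h0
  simp only [pl, Polynomial.finset_sum_coeff, Polynomial.coeff_zero] at h1
  rw [Finset.sum_eq_single (i, j)] at h1
  · rw [if_pos h, Polynomial.coeff_C_mul_X_pow, if_pos rfl] at h1
    exact mul_ne_zero ha (by positivity) h1
  · intro t _ ht
    split_ifs with h2
    · rw [Polynomial.coeff_C_mul_X_pow, if_neg]
      intro h3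
      apply ht
      have := t.1.2; have := t.2.2; have := i.2; have := j.2
      ext
      · show (t.1 : ℕ) = i
        omega
      · show (t.2 : ℕ) = j
        omega
    · simp
  · simp

lemma Qf_eq (W : ℕ) (a : Fin W × Fin W × Fin W → ℤ) (n0 : ℕ) (y : ℝ) :
    Qf W a n0 y = ∑ l : Fin W, exp (-2 * π * (l : ℕ) * y) *
      ((pl W a n0 l).map (Int.castRingHom ℝ)).eval y := by
  rw [Qf, Fintype.sum_prod_type]
  refine Finset.sum_congr rfl fun l _ => ?_
  rw [pl, Polynomial.map_sum, Polynomial.eval_finset_sum, Finset.mul_sum]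
  refine Finset.sum_congr rfl fun t _ => ?_
  split_ifs
  · simp; ring
  · simp

lemma pl_eval_bound (W : ℕ) (a : Fin W × Fin W × Fin W → ℤ) {A0 : ℝ} (hA0 : 0 ≤ A0)
    (ha : ∀ t, |(a t : ℝ)| ≤ A0) (n0 : ℕ) (l : Fin W) {y : ℝ} (hy : 1 ≤ y) :
    |((pl W a n0 l).map (Int.castRingHom ℝ)).eval y| ≤
      (W : ℝ) ^ 2 * (A0 * 2 ^ (24 * W) * y ^ (48 * W)) := by
  rw [pl, Polynomial.map_sum, Polynomial.eval_finset_sum]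
  have hterm : ∀ t : Fin W × Fin W, |(Polynomial.map (Int.castRingHom ℝ)
      (if 2 * (t.1 : ℕ) + t.2 = n0 then
      Polynomial.C (a (l, t) * 2 ^ (24 * (W - t.2) : ℕ)) *
      Polynomial.X ^ (48 * W - 24 * (t.1 + t.2) : ℕ) else 0)).eval y| ≤
      A0 * 2 ^ (24 * W) * y ^ (48 * W) := by
    intro t
    have hy0 : 0 < y := by linarith
    split_ifs
    · simp only [Polynomial.map_mul, Polynomial.map_C, Polynomial.map_pow, Polynomial.map_X,
        Polynomial.eval_mul, Polynomial.eval_C, Polynomial.eval_pow, Polynomial.eval_X]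
      rw [eq_intCast]
      push_cast
      rw [abs_mul, abs_mul, abs_of_nonneg (by positivity : (0 : ℝ) ≤ 2 ^ (24 * (W - t.2) : ℕ)),
        abs_of_nonneg (by positivity : (0 : ℝ) ≤ y ^ (48 * W - 24 * (t.1 + t.2) : ℕ))]
      have h1 := ha (l, t)
      have h2 : (2 : ℝ) ^ (24 * (W - t.2) : ℕ) ≤ 2 ^ (24 * W) :=
        pow_le_pow_right₀ (by norm_num) (by omega)
      have h3 : y ^ (48 * W - 24 * (t.1 + t.2) : ℕ) ≤ y ^ (48 * W) :=
        pow_le_pow_right₀ hy (by omega)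
      gcongr
    · simp; positivity
  refine (Finset.abs_sum_le_sum_abs _ _).trans ((Finset.sum_le_sum fun t _ => hterm t).trans ?_)
  simp [Fintype.card_prod]
  apply le_of_eq; ring

/-- At an integer `Y` which is not a root of the first nonzero coefficient `pl W a n0 l0`, that
coefficient is an integer of absolute value at least `1`, and its term dominates all later ones. -/
lemma Qf_lower (W : ℕ) (a : Fin W × Fin W × Fin W → ℤ) {A0 : ℝ} (hA0 : 0 ≤ A0)
    (ha : ∀ t, |(a t : ℝ)| ≤ A0) (n0 : ℕ) (l0 : Fin W) (Y : ℕ) (hY : 1 ≤ Y)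
    (hl0 : (pl W a n0 l0).eval (Y : ℤ) ≠ 0) (hlt : ∀ l < l0, pl W a n0 l = 0)
    (hsmall : exp (-2 * π * Y) * ((W : ℝ) ^ 3 * (A0 * 2 ^ (24 * W) * (Y : ℝ) ^ (48 * W))) ≤ 1 / 2) :
    1 / 2 * exp (-2 * π * W * Y) ≤ |Qf W a n0 Y| := by
  have hYR : (1 : ℝ) ≤ Y := by exact_mod_cast hY
  rw [Qf_eq, ← Finset.add_sum_erase _ _ (Finset.mem_univ l0)]
  set P : Fin W → ℝ := fun l => ((pl W a n0 l).map (Int.castRingHom ℝ)).eval (Y : ℝ) with hP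
  have h1 : 1 ≤ |P l0| := by
    have e : P l0 = (((pl W a n0 l0).eval (Y : ℤ) : ℤ) : ℝ) := by
      rw [hP]
      have := Polynomial.eval_intCast_map (Int.castRingHom ℝ) (pl W a n0 l0) (Y : ℤ)
      simpa using this
    rw [e]
    exact_mod_cast Int.one_le_abs hl0
  set e0 := exp (-2 * π * (l0 : ℕ) * Y) with he0
  set K := A0 * 2 ^ (24 * W) * (Y : ℝ) ^ (48 * W) with hK
  have hK0 : 0 ≤ K := by positivity
  have hterm : ∀ l ∈ Finset.univ.erase l0, |exp (-2 * π * (l : ℕ) * Y) * P l| ≤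
      e0 * (exp (-2 * π * Y) * ((W : ℝ) ^ 2 * K)) := by
    intro l hl
    rcases lt_or_gt_of_ne (Finset.ne_of_mem_erase hl) with h | h
    · have : P l = 0 := by simp [hP, hlt l h]
      rw [this]; simp; positivity
    · rw [abs_mul, abs_of_pos (exp_pos _), he0, ← mul_assoc, ← exp_add]
      have hb := pl_eval_bound W a hA0 ha n0 l hYR
      have hl1 : ((l0 : ℕ) : ℝ) + 1 ≤ (l : ℕ) := by exact_mod_cast h
      gcongr
      have : π * Y * (((l0 : ℕ) : ℝ) + 1) ≤ π * Y * (l : ℕ) := by gcongr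
      linarith
  have hsum : |∑ l ∈ Finset.univ.erase l0, exp (-2 * π * (l : ℕ) * Y) * P l| ≤ e0 * (1 / 2) := by
    refine (Finset.abs_sum_le_sum_abs _ _).trans ((Finset.sum_le_card_nsmul _ _ _ hterm).trans ?_)
    rw [nsmul_eq_mul]
    have hc : ((Finset.univ.erase l0).card : ℝ) ≤ W := by
      exact_mod_cast (Finset.card_le_univ _).trans (by simp)
    calc _ ≤ (W : ℝ) * (e0 * (exp (-2 * π * Y) * ((W : ℝ) ^ 2 * K))) := by gcongr
      _ = e0 * (exp (-2 * π * Y) * ((W : ℝ) ^ 3 * K)) := by ring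
      _ ≤ _ := by gcongr
  have hmain : e0 ≤ |e0 * P l0| := by
    rw [abs_mul, abs_of_pos (exp_pos _)]
    exact le_mul_of_one_le_right (exp_pos _).le h1
  have he1 : exp (-2 * π * W * Y) ≤ e0 := by
    apply exp_le_exp.2
    have : ((l0 : ℕ) : ℝ) ≤ W := by exact_mod_cast l0.2.le
    have : π * Y * ((l0 : ℕ) : ℝ) ≤ π * Y * W := by gcongr
    linarith
  have h3 := abs_sub_abs_le_abs_sub (e0 * P l0)
    (-∑ l ∈ Finset.univ.erase l0, exp (-2 * π * (l : ℕ) * Y) * P l)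
  rw [abs_neg, sub_neg_eq_add] at h3
  linarith

/-- Propagation of smallness from the grid to large arguments. -/
lemma Qf_upper (W : ℕ) (a : Fin W × Fin W × Fin W → ℤ) (n0 : ℕ) (R : ℝ) (hR : 0 < R)
    (y0 δ : ℝ) (hδ : 0 ≤ δ) (hb : ∀ m < W * (48 * W + 1), |Qf W a n0 (y0 + m / R)| ≤ δ) (m : ℕ) :
    |Qf W a n0 (y0 + m / R)| ≤ δ * (2 * ((m : ℝ) + 1)) ^ (W * (48 * W + 1)) := by
  refine expPoly_bound W (48 * W) (fun l => if h : l < W then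
    (pl W a n0 ⟨l, h⟩).map (Int.castRingHom ℝ) else 0) (fun l hl => ?_) R hR y0 δ hδ _
    (fun y => ?_) hb m
  · simp only [hl, dif_pos]
    exact Polynomial.natDegree_map_le.trans (pl_natDegree W a n0 _)
  · rw [Qf_eq, Finset.sum_range]
    simp

end

/-! ### The zero estimate -/

section

open Real

lemma log_natCast_le (s : ℕ) : log s ≤ s := by
  rcases Nat.eq_zero_or_pos s with h | h
  · simp [h]
  · have : (0 : ℝ) < s := by exact_mod_cast h
    linarith [log_le_sub_one_of_pos this]

lemma le_exp_of_log_le {x y : ℝ} (hx : 0 < x) (h : log x ≤ y) : x ≤ exp y :=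
  (log_le_iff_le_exp hx).1 h

/-- The least exponent `n₀ = 2 i + j` which occurs; the monomials with `2 i + j = n₀` and the same `l`
have different exponents of `y`, so they do not cancel in `pl`. -/
lemma exists_min_level (W : ℕ) (a : Fin W × Fin W × Fin W → ℤ) (ha : a ≠ 0) : ∃ n0 : ℕ,
    n0 ≤ 3 * W ∧ (∀ t, a t ≠ 0 → n0 ≤ 2 * (t.2.1 : ℕ) + t.2.2) ∧
      ∃ l0 : Fin W, pl W a n0 l0 ≠ 0 ∧ ∀ l < l0, pl W a n0 l = 0 := by
  classical
  have hex : ∃ n, ∃ t, a t ≠ 0 ∧ 2 * (t.2.1 : ℕ) + t.2.2 = n := by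
    obtain ⟨t, ht⟩ := Function.ne_iff.1 ha
    exact ⟨_, t, ht, rfl⟩
  obtain ⟨t, ht, htn⟩ := Nat.find_spec hex
  refine ⟨Nat.find hex, ?_, fun t ht => Nat.find_min' hex ⟨t, ht, rfl⟩, ?_⟩
  · rw [← htn]; have := t.2.1.2; have := t.2.2.2; omega
  · have h1 : (Finset.univ.filter fun l : Fin W => pl W a (Nat.find hex) l ≠ 0).Nonempty :=
      ⟨t.1, by simpa using pl_ne_zero W a _ t.1 t.2.1 t.2.2 htn ht⟩
    refine ⟨Finset.min' _ h1, ?_, fun l hl => ?_⟩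
    · have := Finset.min'_mem _ h1
      simpa using this
    · by_contra hne
      exact absurd (Finset.min'_le (Finset.univ.filter fun l : Fin W => pl W a (Nat.find hex) l ≠ 0)
        l (by simpa using hne)) (not_le.2 hl)

lemma exists_nonroot (P : Polynomial ℤ) (hP : P ≠ 0) (n Y0 : ℕ) (hn : P.natDegree ≤ n) :
    ∃ Y : ℕ, Y0 ≤ Y ∧ Y ≤ Y0 + n ∧ P.eval (Y : ℤ) ≠ 0 := by
  by_contra hcon
  push Not at hcon
  refine hP (Polynomial.eq_zero_of_natDegree_lt_card_of_eval_eq_zero P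
    (f := fun i : Fin (n + 1) => ((Y0 + i : ℕ) : ℤ)) (fun i j h => ?_) (fun i => ?_) ?_)
  · ext
    have : ((Y0 + i : ℕ) : ℤ) = ((Y0 + j : ℕ) : ℤ) := h
    omega
  · exact hcon _ (by omega) (by omega)
  · simp; omega

set_option maxHeartbeats 1000000 in
/-- Zero estimate: the order of vanishing of `Fun` at the origin is bounded polynomially. -/
lemma zero_est (C1 : ℝ) : ∃ s1 : ℕ, ∀ s ≥ s1, ∀ a : Fin (s ^ 4) × Fin (s ^ 4) × Fin (s ^ 4) → ℤ,
    a ≠ 0 → (∀ t, |(a t : ℝ)| ≤ exp (C1 * s ^ 5)) → ∀ α : ℕ → ℂ, PSer α (Fun (s ^ 4) a) →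
      ∃ n < s ^ 30, α n ≠ 0 := by
  obtain ⟨C, hC, hg⟩ := D_growth
  obtain ⟨s1, hs1⟩ := exists_nat_ge (2000 + |C1| + log C)
  have hlC : 0 ≤ log C := log_nonneg hC
  refine ⟨s1, fun s hs => ?_⟩
  obtain ⟨W, hW⟩ : ∃ W, s ^ 4 = W := ⟨_, rfl⟩
  rw [hW]
  intro a ha0 hab α hα
  by_contra hcon
  push Not at hcon
  have hsR : (s1 : ℝ) ≤ s := by exact_mod_cast hs
  have hs2000 : (2000 : ℝ) ≤ s := by linarith [abs_nonneg C1]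
  have hsC1 : C1 ≤ s := by linarith [le_abs_self C1]
  have hsC : log C ≤ s := by linarith [abs_nonneg C1]
  have hs0 : (0 : ℝ) < s := by linarith
  have hsN : 2000 ≤ s := by exact_mod_cast hs2000
  have hls : log s ≤ s := log_natCast_le s
  have hpw : ∀ k : ℕ, 2000 * (s : ℝ) ^ k ≤ s ^ (k + 1) := fun k => by
    rw [pow_succ, mul_comm]; gcongr
  have p0 := hpw 0
  have p1 := hpw 1
  have p2 := hpw 2
  have p3 := hpw 3
  have p4 := hpw 4
  have p5 := hpw 5
  have p6 := hpw 6
  have p7 := hpw 7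
  have p8 := hpw 8
  have p9 := hpw 9
  have p10 := hpw 10
  have p11 := hpw 11
  have p12 := hpw 12
  have p13 := hpw 13
  have p14 := hpw 14
  have p15 := hpw 15
  have p16 := hpw 16
  have p17 := hpw 17
  have p18 := hpw 18
  have p19 := hpw 19
  simp only [pow_zero, pow_one, zero_add, Nat.reduceAdd, mul_one] at p0 p1 p2 p3 p4 p5 p6 p7 p8 p9 p10 p11 p12 p13 p14 p15 p16 p17 p18 p19
  have hC5 : C1 * (s : ℝ) ^ 5 ≤ s ^ 6 := by
    rw [pow_succ _ 5, mul_comm]; gcongr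
  have hWR : (W : ℝ) = s ^ 4 := by rw [← hW]; push_cast; ring
  set A0 := exp (C1 * (s : ℝ) ^ 5) with hA0
  set ν := W * (48 * W + 1) with hν
  have hνR : (ν : ℝ) = 48 * s ^ 8 + s ^ 4 := by rw [hν]; push_cast; rw [hWR]; ring
  have hν1 : 48 * (s : ℝ) ^ 8 ≤ ν := by rw [hνR]; linarith
  have hν2 : (ν : ℝ) ≤ 49 * s ^ 8 := by rw [hνR]; linarith
  have hν0 : (0 : ℝ) < ν := by linarith
  set R : ℝ := (s : ℝ) ^ 20 with hR
  have hR0 : 0 < R := by positivity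
  obtain ⟨n0, hn0W, hn0, l0, hl0, hl0min⟩ := exists_min_level W a ha0
  have hn0R : (n0 : ℝ) ≤ 3 * s ^ 4 := by rw [← hWR]; exact_mod_cast hn0W
  have b2 : (2 : ℝ) ^ (24 * W) ≤ exp (24 * s ^ 4) := by
    refine le_exp_of_log_le (by positivity) ?_
    rw [log_pow]; push_cast; rw [hWR]
    have : log 2 ≤ 1 := by linarith [log_two_lt_d9]
    exact mul_le_of_le_one_right (by positivity) this
  have bW : (W : ℝ) ^ 3 ≤ exp (12 * s) := by
    refine le_exp_of_log_le (by rw [hWR]; positivity) ?_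
    rw [log_pow, hWR, log_pow]; push_cast; linarith
  have bC : C ^ (4 * W) ≤ exp (4 * s ^ 5) := by
    refine le_exp_of_log_le (by positivity) ?_
    rw [log_pow]; push_cast; rw [hWR, pow_succ _ 4, ← mul_assoc]
    gcongr
  have bA : A0 ≤ exp (s ^ 6) := exp_le_exp.2 hC5
  -- `Qf` is tiny at the first `ν` points of the grid `(ν + m) / R`, all of order `s⁻¹²`
  have hδ : ∀ m < ν, |Qf W a n0 (ν / R + m / R)| ≤ 2 * exp (-(s : ℝ) ^ 11) := by
    intro m hm
    have hmR : (m : ℝ) ≤ ν := by exact_mod_cast hm.le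
    have hm0 : (0 : ℝ) ≤ m := by positivity
    set y := (ν : ℝ) / R + m / R with hy
    have hy1 : ν / R ≤ y := by rw [hy]; have : 0 ≤ (m : ℝ) / R := by positivity
                               linarith
    have hy2 : y ≤ 2 * ν / R := by
      rw [hy, ← add_div]; gcongr; linarith
    have hy0 : 0 < y := lt_of_lt_of_le (by positivity) hy1
    have hyle : y ≤ 1 := by
      refine hy2.trans ?_
      rw [div_le_one hR0, hR]
      linarith
    have hinv1 : 1 / y ≤ R / ν := by
      rw [div_le_div_iff₀ hy0 hν0]
      rw [div_le_iff₀ hR0] at hy1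
      linarith
    have hinv2 : R / (2 * ν) ≤ 1 / y := by
      rw [div_le_div_iff₀ (by positivity) hy0]
      rw [le_div_iff₀ hR0] at hy2
      linarith
    have hRν : R / ν ≤ s ^ 12 / 48 := by
      rw [div_le_div_iff₀ hν0 (by norm_num), hR]
      calc (s : ℝ) ^ 20 * 48 = s ^ 12 * (48 * s ^ 8) := by ring
        _ ≤ _ := by gcongr
    have hRν2 : s ^ 12 / 98 ≤ R / (2 * ν) := by
      rw [div_le_div_iff₀ (by norm_num) (by positivity), hR]
      calc (s : ℝ) ^ 12 * (2 * ν) ≤ s ^ 12 * (2 * (49 * s ^ 8)) := by gcongr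
        _ = _ := by ring
    have h1 := Qf_bound W a hab n0 hn0 hy0 hyle
    have h2 := Fun_small hC hg W a (exp_pos _).le hab hα hcon hy0 hyle
    have c1 : exp (2 * n0 * π / y) ≤ exp (s ^ 16) := by
      apply exp_le_exp.2
      rw [show 2 * (n0 : ℝ) * π / y = 2 * n0 * π * (1 / y) by ring]
      calc _ ≤ 2 * (3 * (s : ℝ) ^ 4) * 4 * (s ^ 12 / 48) := by
            have hq := hinv1.trans hRν
            have hq0 : 0 ≤ 1 / y := by positivity
            have hp4 := pi_le_four
            have : 2 * (n0 : ℝ) * π ≤ 2 * (3 * (s : ℝ) ^ 4) * 4 := by gcongr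
            exact mul_le_mul this hq hq0 (by positivity)
        _ = s ^ 16 / 2 := by ring
        _ ≤ _ := by linarith [pow_pos hs0 16]
    have c2 : exp (-π * y * (s ^ 30 : ℕ)) ≤ exp (-(144 * s ^ 18)) := by
      apply exp_le_exp.2
      have : 48 * (s : ℝ) ^ 18 ≤ y * s ^ 30 := by
        calc 48 * (s : ℝ) ^ 18 = 48 * s ^ 8 / R * s ^ 30 := by rw [hR]; field_simp
          _ ≤ ν / R * s ^ 30 := by gcongr
          _ ≤ _ := by gcongr
      push_cast
      have : 3 * (48 * (s : ℝ) ^ 18) ≤ π * (y * s ^ 30) :=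
        mul_le_mul pi_gt_three.le this (by positivity) pi_pos.le
      linarith
    have c3 : (2 / y) ^ (24 * W) ≤ exp (504 * s ^ 5) := by
      refine le_exp_of_log_le (by positivity) ?_
      have e1 : 2 / y ≤ 2 * s ^ 20 := by
        rw [show 2 / y = 2 * (1 / y) by ring]
        have : s ^ 12 / 48 ≤ (s : ℝ) ^ 20 := by linarith [pow_pos hs0 12]
        linarith
      have e2 : log (2 / y) ≤ 21 * s := by
        refine (log_le_log (by positivity) e1).trans ?_
        rw [log_mul (by norm_num) (by positivity), log_pow]
        push_cast
        linarith [log_two_lt_d9]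
      rw [log_pow]; push_cast; rw [hWR]
      calc 24 * (s : ℝ) ^ 4 * log (2 / y) ≤ 24 * s ^ 4 * (21 * s) := by gcongr
        _ = _ := by ring
    have c4 : exp (-π / y) ≤ exp (-(s ^ 12 / 98)) := by
      apply exp_le_exp.2
      rw [show -π / y = -(π * (1 / y)) by ring]
      have : 1 / y ≤ π * (1 / y) := by
        have := pi_gt_three
        exact le_mul_of_one_le_left (by positivity) (by linarith)
      linarith
    have c5 : 192 * (W : ℝ) ≤ exp (192 + 4 * s) := by
      refine le_exp_of_log_le (by rw [hWR]; positivity) ?_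
      rw [hWR, log_mul (by norm_num) (by positivity), log_pow]
      push_cast
      linarith [log_le_sub_one_of_pos (show (0 : ℝ) < 192 by norm_num)]
    have t1 : 2 ^ (24 * W) * exp (2 * n0 * π / y) * ‖Fun W a ((exp (-2 * π * y) : ℝ) : ℂ)‖ ≤
        exp (-(s : ℝ) ^ 11) := by
      calc _ ≤ exp (24 * s ^ 4) * exp (s ^ 16) * (exp (-(144 * s ^ 18)) *
            (exp (12 * s) * exp (s ^ 6) * (exp (4 * s ^ 5) * exp (504 * s ^ 5)))) := by
            gcongr
            refine h2.trans ?_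
            gcongr
        _ = exp (24 * s ^ 4 + s ^ 16 + (-(144 * s ^ 18) + (12 * s + s ^ 6 +
            (4 * s ^ 5 + 504 * s ^ 5)))) := by simp only [exp_add]
        _ ≤ _ := by
            apply exp_le_exp.2
            linarith
    have t2 : (W : ℝ) ^ 3 * A0 * 2 ^ (24 * W) * (192 * W * exp (-π / y)) ≤
        exp (-(s : ℝ) ^ 11) := by
      calc _ ≤ exp (12 * s) * exp (s ^ 6) * exp (24 * s ^ 4) * (exp (192 + 4 * s) *
            exp (-(s ^ 12 / 98))) := by gcongr
        _ = exp (12 * s + s ^ 6 + 24 * s ^ 4 + ((192 + 4 * s) + -(s ^ 12 / 98))) := by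
            simp only [exp_add]
        _ ≤ _ := by
            apply exp_le_exp.2
            linarith
    linarith
  obtain ⟨Y, hY1, hY2, hY3⟩ := exists_nonroot _ hl0 (48 * W) (s ^ 6) (pl_natDegree W a n0 l0)
  have hY1R : (s : ℝ) ^ 6 ≤ Y := by exact_mod_cast hY1
  have hY2R : (Y : ℝ) ≤ 49 * s ^ 6 := by
    have : (Y : ℝ) ≤ s ^ 6 + 48 * W := by exact_mod_cast hY2
    rw [hWR] at this
    linarith
  have hY0 : (0 : ℝ) < Y := lt_of_lt_of_le (by positivity) hY1R
  have hlY : log Y ≤ 49 + 6 * s := by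
    refine (log_le_log hY0 hY2R).trans ?_
    rw [log_mul (by norm_num) (by positivity), log_pow]
    push_cast
    linarith [log_le_sub_one_of_pos (show (0 : ℝ) < 49 by norm_num)]
  have hlow := Qf_lower W a (exp_pos _).le hab n0 l0 Y (by exact_mod_cast hY0) hY3 hl0min (by
    have d1 : (Y : ℝ) ^ (48 * W) ≤ exp (2640 * s ^ 5) := by
      refine le_exp_of_log_le (by positivity) ?_
      rw [log_pow]; push_cast; rw [hWR]
      calc 48 * (s : ℝ) ^ 4 * log Y ≤ 48 * s ^ 4 * (55 * s) := by gcongr; linarith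
        _ = _ := by ring
    have d2 : exp (-2 * π * Y) ≤ exp (-(6 * s ^ 6)) := by
      apply exp_le_exp.2
      have : 3 * (s : ℝ) ^ 6 ≤ π * Y := mul_le_mul pi_gt_three.le hY1R (by positivity) pi_pos.le
      linarith
    calc _ ≤ exp (-(6 * s ^ 6)) * (exp (12 * s) * (exp (s ^ 6) * exp (24 * s ^ 4) *
          exp (2640 * s ^ 5))) := by gcongr
      _ = exp (-(6 * s ^ 6) + (12 * s + (s ^ 6 + 24 * s ^ 4 + 2640 * s ^ 5))) := by
          simp only [exp_add]
      _ ≤ exp (-1) := by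
          apply exp_le_exp.2
          linarith
      _ ≤ _ := by linarith [exp_neg_one_lt_d9])
  -- the point `Y` belongs to the grid since `R = s ^ 20` is an integer
  have hνRY : ν ≤ s ^ 20 * Y := by
    have : (ν : ℝ) ≤ s ^ 20 * Y := by
      calc (ν : ℝ) ≤ s ^ 20 * 1 := by linarith
        _ ≤ _ := by gcongr; exact_mod_cast hY0
    exact_mod_cast this
  have hup := Qf_upper W a n0 R hR0 (ν / R) (2 * exp (-(s : ℝ) ^ 11)) (by positivity) hδ
    (s ^ 20 * Y - ν)
  have hpt : (ν : ℝ) / R + ((s ^ 20 * Y - ν : ℕ) : ℝ) / R = Y := by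
    rw [Nat.cast_sub hνRY, hR]; push_cast; field_simp; ring
  rw [hpt] at hup
  have hgrow : (2 * (((s ^ 20 * Y - ν : ℕ) : ℝ) + 1)) ^ ν ≤ exp (6076 * s ^ 9) := by
    have e1 : 2 * (((s ^ 20 * Y - ν : ℕ) : ℝ) + 1) ≤ 98 * s ^ 26 := by
      rw [Nat.cast_sub hνRY]; push_cast
      have : (s : ℝ) ^ 20 * Y ≤ s ^ 20 * (49 * s ^ 6) := by gcongr
      have e : (s : ℝ) ^ 20 * (49 * s ^ 6) = 49 * s ^ 26 := by ring
      linarith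
    have e2 : log (2 * (((s ^ 20 * Y - ν : ℕ) : ℝ) + 1)) ≤ 124 * s := by
      refine (log_le_log (by positivity) e1).trans ?_
      rw [log_mul (by norm_num) (by positivity), log_pow]
      push_cast
      linarith [log_le_sub_one_of_pos (show (0 : ℝ) < 98 by norm_num)]
    refine le_exp_of_log_le (by positivity) ?_
    rw [log_pow]
    calc (ν : ℝ) * _ ≤ 49 * s ^ 8 * (124 * s) := by
          refine mul_le_mul hν2 e2 (log_nonneg ?_) (by positivity)
          have : (0 : ℝ) ≤ ((s ^ 20 * Y - ν : ℕ) : ℝ) := by positivity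
          linarith
      _ = _ := by ring
  have hWY : exp (-(392 * s ^ 10)) ≤ exp (-2 * π * W * Y) := by
    apply exp_le_exp.2
    rw [hWR]
    have : 2 * π * s ^ 4 * Y ≤ 2 * 4 * s ^ 4 * (49 * s ^ 6) := by
      gcongr
      exact pi_le_four
    have e : 2 * 4 * (s : ℝ) ^ 4 * (49 * s ^ 6) = 392 * s ^ 10 := by ring
    linarith
  have hfin : exp (-(392 * (s : ℝ) ^ 10)) ≤ exp (2 - s ^ 11 + 6076 * s ^ 9) := by
    calc exp (-(392 * (s : ℝ) ^ 10)) ≤ 4 * exp (-(s : ℝ) ^ 11) * exp (6076 * s ^ 9) := by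
          have := hup.trans (mul_le_mul_of_nonneg_left hgrow (by positivity))
          linarith
      _ ≤ exp 2 * exp (-(s : ℝ) ^ 11) * exp (6076 * s ^ 9) := by
          gcongr
          have : exp 2 = exp 1 * exp 1 := by rw [← exp_add]; norm_num
          nlinarith [exp_one_gt_d9]
      _ = _ := by rw [← exp_add, ← exp_add]; congr 1
  have := exp_le_exp.1 hfin
  linarith

end

/-! ### Division by zeros, and sums of primes -/

section

open Metric

lemma divide_zeros (S : Finset ℕ) (x : ℕ → ℂ) (hx : Function.Injective x)
    (hx1 : ∀ p ∈ S, ‖x p‖ < 1) {G : ℂ → ℂ} (hG : DifferentiableOn ℂ G (ball 0 1))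
    (h0 : ∀ p ∈ S, G (x p) = 0) :
    ∃ H : ℂ → ℂ, DifferentiableOn ℂ H (ball 0 1) ∧
      ∀ z, G z = (∏ p ∈ S, (z - x p)) * H z := by
  induction S using Finset.induction_on with
  | empty => exact ⟨G, hG, by simp⟩
  | insert p S hp ih =>
    obtain ⟨H, hH, hGH⟩ := ih (fun k hk => hx1 k (Finset.mem_insert_of_mem hk))
      (fun k hk => h0 k (Finset.mem_insert_of_mem hk))
    have hHp : H (x p) = 0 := by
      have h1 := h0 p (Finset.mem_insert_self _ _)
      rw [hGH] at h1
      refine (mul_eq_zero.1 h1).resolve_left (Finset.prod_ne_zero_iff.2 fun k hk => ?_)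
      exact sub_ne_zero.2 fun h => hp (by rwa [hx h])
    refine ⟨dslope H (x p), (Complex.differentiableOn_dslope (isOpen_ball.mem_nhds ?_)).2 hH,
      fun z => ?_⟩
    · simpa using hx1 p (Finset.mem_insert_self _ _)
    · rw [hGH, Finset.prod_insert hp]
      have := sub_smul_dslope_of_zero hHp z
      rw [smul_eq_mul] at this
      rw [← this]; ring

/-- A Jensen-type inequality: a function that is bounded on the circle `|z| = r` and has many zeros
close to the origin is very small at the origin. -/
lemma norm_zero_le (S : Finset ℕ) (x : ℕ → ℂ) (hx : Function.Injective x)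
    (hx1 : ∀ p ∈ S, ‖x p‖ ≤ 1 / 4) {G : ℂ → ℂ} (hG : DifferentiableOn ℂ G (ball 0 1))
    (h0 : ∀ p ∈ S, G (x p) = 0) {r B : ℝ} (hr : 1 / 2 ≤ r) (hr1 : r < 1) (hB0 : 0 ≤ B)
    (hB : ∀ z, ‖z‖ = r → ‖G z‖ ≤ B) :
    ‖G 0‖ ≤ B * 4 ^ S.card * ∏ p ∈ S, ‖x p‖ := by
  obtain ⟨H, hH, hGH⟩ := divide_zeros S x hx (fun p hp => (hx1 p hp).trans_lt (by norm_num)) hG h0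
  have hcl : DiffContOnCl ℂ H (ball 0 r) := by
    refine DifferentiableOn.diffContOnCl (hH.mono ?_)
    exact closure_ball_subset_closedBall.trans (closedBall_subset_ball hr1)
  have hb : ∀ z ∈ frontier (ball (0 : ℂ) r), ‖H z‖ ≤ B * 4 ^ S.card := by
    intro z hz
    rw [frontier_ball _ (by linarith), mem_sphere_zero_iff_norm] at hz
    have h1 := hB z hz
    rw [hGH, norm_mul, norm_prod] at h1
    have h2 : ((1 : ℝ) / 4) ^ S.card ≤ ∏ p ∈ S, ‖z - x p‖ := by
      rw [← Finset.prod_const]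
      refine Finset.prod_le_prod (fun _ _ => by norm_num) fun p hp => ?_
      have := norm_sub_norm_le z (x p)
      have := hx1 p hp
      linarith
    have h3 : ((1 : ℝ) / 4) ^ S.card * ‖H z‖ ≤ B :=
      (mul_le_mul_of_nonneg_right h2 (norm_nonneg _)).trans h1
    rw [one_div, inv_pow, inv_mul_le_iff₀ (by positivity)] at h3
    linarith
  have h4 := Complex.norm_le_of_forall_mem_frontier_norm_le isBounded_ball hcl hb
    (subset_closure (mem_ball_self (by linarith : 0 < r)))
  rw [hGH, norm_mul, norm_prod, mul_comm]
  simp only [zero_sub, norm_neg]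
  exact mul_le_mul_of_nonneg_right h4 (Finset.prod_nonneg fun _ _ => norm_nonneg _)

/-- The primes in `(t²², t²⁴]`. -/
def primeSet (t : ℕ) : Finset ℕ := {p ∈ Finset.Ioc (t ^ 22) (t ^ 24) | p.Prime}

/-- A consequence of Chebyshev's bound `π(x) ≫ x / log x` at `x = t²⁴`. -/
lemma card_primeSet {t : ℕ} (ht : 200 ≤ t) : t ^ 22 ≤ (primeSet t).card := by
  have htR : (200 : ℝ) ≤ t := by exact_mod_cast ht
  have h1 : Nat.primeCounting (t ^ 24) ≤ t ^ 22 + 1 + (primeSet t).card := by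
    rw [← Nat.primesLE_card_eq_primeCounting]
    calc (Nat.primesLE (t ^ 24)).card ≤ (Finset.range (t ^ 22 + 1) ∪ primeSet t).card := by
          apply Finset.card_le_card
          intro p hp
          rw [Nat.mem_primesLE] at hp
          rw [Finset.mem_union, Finset.mem_range, primeSet, Finset.mem_filter, Finset.mem_Ioc]
          by_cases h : p < t ^ 22 + 1
          · exact Or.inl h
          · exact Or.inr ⟨⟨by omega, hp.1⟩, hp.2⟩
      _ ≤ _ := by
          refine (Finset.card_union_le _ _).trans ?_
          rw [Finset.card_range]
  have h2 := (Chebyshev.psi_ge (t ^ 24)).trans (Chebyshev.psi_le_primeCounting_mul_log (t ^ 24))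
  have hlt : Real.log t ≤ t := (Real.log_le_sub_one_of_pos (by linarith)).trans (by linarith)
  have hpw : ∀ k : ℕ, 200 * (t : ℝ) ^ k ≤ t ^ (k + 1) := fun k => by
    rw [pow_succ, mul_comm]; gcongr
  have h3 : Real.log (((t ^ 24 : ℕ) : ℝ) + 1) ≤ 25 * t := by
    have : (((t ^ 24 : ℕ) : ℝ) + 1) ≤ t ^ 25 := by
      have : 200 * (t : ℝ) ^ 24 ≤ t ^ 25 := hpw 24
      have h1 : (1 : ℝ) ≤ t ^ 24 := one_le_pow₀ (by linarith)
      push_cast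
      linarith
    refine (Real.log_le_log (by positivity) this).trans ?_
    rw [Real.log_pow]; push_cast; linarith
  have h4 : Real.log ((t ^ 24 : ℕ) : ℝ) ≤ 24 * t := by
    push_cast
    rw [Real.log_pow]; push_cast; linarith
  have h5 : (Nat.primeCounting (t ^ 24) : ℝ) * Real.log ((t ^ 24 : ℕ) : ℝ) ≤
      (t ^ 22 + 1 + (primeSet t).card) * (24 * t) := by
    have : (Nat.primeCounting (t ^ 24) : ℝ) ≤ t ^ 22 + 1 + (primeSet t).card := by exact_mod_cast h1
    refine mul_le_mul this h4 (Real.log_nonneg ?_) (by positivity)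
    exact_mod_cast Nat.one_le_pow _ _ (by omega)
  by_contra hcon
  push Not at hcon
  have hcon' : ((primeSet t).card : ℝ) ≤ t ^ 22 := by exact_mod_cast hcon.le
  have h6 : ((t : ℝ) ^ 22 + 1 + (primeSet t).card) * (24 * t) ≤ (t ^ 22 + 1 + t ^ 22) * (24 * t) := by
    gcongr
  have h7 : (1 / 2 : ℝ) * t ^ 24 ≤ ((t ^ 24 : ℕ) : ℝ) * Real.log 2 := by
    push_cast
    rw [mul_comm]
    gcongr
    linarith [Real.log_two_gt_d9]
  have h8 : 200 * (t : ℝ) ^ 23 ≤ t ^ 24 := hpw 23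
  have h9 : (t : ℝ) ≤ t ^ 23 := le_self_pow₀ (by linarith) (by norm_num)
  have h10 : 0 < (t : ℝ) := by linarith
  have h11 : ((t : ℝ) ^ 22 + 1 + t ^ 22) * (24 * t) = 48 * t ^ 23 + 24 * t := by ring
  linarith [pow_pos h10 23]

lemma sum_primeSet {t : ℕ} (ht : 200 ≤ t) : t ^ 44 ≤ ∑ p ∈ primeSet t, p := by
  calc t ^ 44 = t ^ 22 * t ^ 22 := by ring
    _ ≤ (primeSet t).card * t ^ 22 := Nat.mul_le_mul_right _ (card_primeSet ht)
    _ = ∑ p ∈ primeSet t, t ^ 22 := by simp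
    _ ≤ _ := Finset.sum_le_sum fun p hp => by
      rw [primeSet, Finset.mem_filter, Finset.mem_Ioc] at hp
      exact hp.1.1.le

lemma card_primeSet_le (t : ℕ) : (primeSet t).card ≤ t ^ 24 := by
  refine (Finset.card_filter_le _ _).trans ?_
  rw [Nat.card_Ioc]; omega

lemma q0_le_exp : q0 ≤ Real.exp (-(1 / 2)) := by
  have := Real.add_one_le_exp (-(1 / 2 : ℝ))
  linarith [q0_lt]

lemma prod_q0_pow_le {t : ℕ} (ht : 200 ≤ t) :
    ∏ p ∈ primeSet t, ‖(q0 : ℂ) ^ p‖ ≤ Real.exp (-(1 / 2) * t ^ 44) := by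
  have h1 : ∏ p ∈ primeSet t, ‖(q0 : ℂ) ^ p‖ = q0 ^ (∑ p ∈ primeSet t, p) := by
    rw [← Finset.prod_pow_eq_pow_sum]
    refine Finset.prod_congr rfl fun p _ => ?_
    rw [norm_pow, norm_q0]
  rw [h1]
  calc q0 ^ (∑ p ∈ primeSet t, p) ≤ q0 ^ (t ^ 44) :=
        pow_le_pow_of_le_one q0_pos.le (by linarith [q0_lt]) (sum_primeSet ht)
    _ ≤ (Real.exp (-(1 / 2))) ^ (t ^ 44) := pow_le_pow_left₀ q0_pos.le q0_le_exp _
    _ = _ := by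
        rw [← Real.exp_nat_mul]; congr 1; push_cast; ring

end

/-! ### The contradiction -/

section

open Real

lemma PSer.apply_zero {a : ℕ → ℂ} {f : ℂ → ℂ} (h : PSer a f) : f 0 = a 0 := by
  have h1 := h 0 (by simp)
  have h2 : HasSum (fun n => a n * (0 : ℂ) ^ n) (a 0) := by
    have := hasSum_single (f := fun n => a n * (0 : ℂ) ^ n) 0 (fun n hn => by simp [hn])
    simpa using this
  exact h1.unique h2

lemma q0_pow_injective : Function.Injective (fun p : ℕ => (q0 : ℂ) ^ p) := by
  intro m n h
  have h' : q0 ^ m = q0 ^ n := by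
    dsimp only at h
    exact_mod_cast h
  exact pow_right_injective₀ q0_pos (by linarith [q0_lt]) h'

/-- The first nonzero Taylor coefficient of `Fun` is a nonzero integer, hence at least `1` in absolute
value; the right-hand side is the upper bound for it which results from the zeros `q₀ ^ p`. -/
lemma one_le_of_zeros {C A0 : ℝ} (hC : 1 ≤ C)
    (hg : ∀ z : ℂ, ‖z‖ < 1 → ‖D z‖ ≤ C * (1 / (1 - ‖z‖)) ^ 6) {W : ℕ}
    (a : Fin W × Fin W × Fin W → ℤ) (hA0 : 0 ≤ A0) (ha : ∀ t, |(a t : ℝ)| ≤ A0) {N : ℕ}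
    (hN : ∀ α : ℕ → ℂ, PSer α (Fun W a) → ∃ n < N, α n ≠ 0) (S : Finset ℕ)
    (hS3 : ∀ p ∈ S, 2 ≤ p) (hS : ∀ p ∈ S, Fun W a ((q0 : ℂ) ^ p) = 0) :
    1 ≤ 4 * ((W : ℝ) ^ 3 * A0 * (C ^ (4 * W) * ((N : ℝ) + 2) ^ (24 * W))) * 4 ^ S.card *
      ∏ p ∈ S, ‖(q0 : ℂ) ^ p‖ := by
  classical
  obtain ⟨α, hα⟩ := intSer_Fun W a
  have hex : ∃ n, (α n : ℂ) ≠ 0 := by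
    obtain ⟨n, -, hn⟩ := hN _ hα
    exact ⟨n, hn⟩
  set M := Nat.find hex with hM
  have hMN : M < N := by
    obtain ⟨n, hn, hn'⟩ := hN _ hα
    exact (Nat.find_min' hex hn').trans_lt hn
  have hM0 : (α M : ℂ) ≠ 0 := Nat.find_spec hex
  obtain ⟨G, hG, hFG⟩ := hα.shift (M := M) (fun n hn => not_not.1 (Nat.find_min hex hn))
  have hG0 : 1 ≤ ‖G 0‖ := by
    rw [hG.apply_zero, zero_add]
    rw [Complex.norm_intCast]
    have : α M ≠ 0 := by exact_mod_cast hM0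
    exact_mod_cast Int.one_le_abs this
  have hm : (0 : ℝ) < M + 2 := by positivity
  have hm1 : (0 : ℝ) < M + 1 := by positivity
  set r : ℝ := ((M : ℝ) + 1) / (M + 2) with hr
  have hr0 : 0 < r := by positivity
  have hr2 : 1 / 2 ≤ r := by
    rw [hr, div_le_div_iff₀ (by norm_num) hm]
    have : (0 : ℝ) ≤ M := by positivity
    linarith
  have hr1 : r < 1 := by rw [hr, div_lt_one hm]; linarith
  have e1 : 1 / (1 - r) = M + 2 := by
    rw [hr]; field_simp; ring
  have e2 : (1 / r) ^ M ≤ 4 := by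
    have h3 : 1 / r ≤ exp (1 / (M + 1)) := by
      have := add_one_le_exp (1 / ((M : ℝ) + 1))
      refine le_trans (le_of_eq ?_) this
      rw [hr]; field_simp; ring
    calc _ ≤ (exp (1 / (M + 1))) ^ M := pow_le_pow_left₀ (by positivity) h3 M
      _ = exp (M * (1 / (M + 1))) := (exp_nat_mul _ _).symm
      _ ≤ exp 1 := by
        apply exp_le_exp.2
        rw [mul_one_div, div_le_one hm1]; linarith
      _ ≤ 4 := by linarith [exp_one_lt_d9]
  refine hG0.trans (norm_zero_le S (fun p => (q0 : ℂ) ^ p) q0_pow_injective ?_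
    hG.differentiableOn ?_ hr2 hr1 (by positivity) ?_)
  · intro p hp
    rw [norm_pow, norm_q0]
    refine (pow_le_pow_of_le_one q0_pos.le (by linarith [q0_lt]) (hS3 p hp)).trans ?_
    nlinarith [q0_lt, q0_pos]
  · intro p hp
    have h1 := hS p hp
    rw [hFG _ (norm_q0_pow_lt p (by have := hS3 p hp; omega))] at h1
    refine (mul_eq_zero.1 h1).resolve_left (pow_ne_zero _ (pow_ne_zero _ ?_))
    exact_mod_cast q0_pos.ne'
  · intro z hz
    have hz1 : ‖z‖ < 1 := by rw [hz]; exact hr1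
    have h1 := Fun_bound hC hg W a ha hz1
    rw [hFG z hz1, norm_mul, norm_pow, hz, e1] at h1
    have h2 : ‖G z‖ = (1 / r) ^ M * (r ^ M * ‖G z‖) := by
      rw [one_div, inv_pow, inv_mul_cancel_left₀ (by positivity)]
    have hMN' : (M : ℝ) ≤ N := by exact_mod_cast hMN.le
    rw [h2]
    refine mul_le_mul e2 (h1.trans ?_) (by positivity) (by norm_num)
    gcongr

theorem not_isAlgebraic_cc : ¬ IsAlgebraic ℚ cc := by
  intro hcc
  obtain ⟨C1, s0, hC1, hs0, hsieg⟩ := exists_a hcc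
  obtain ⟨s1, hzero⟩ := zero_est C1
  obtain ⟨C, hC, hg⟩ := D_growth
  obtain ⟨t, ht⟩ := exists_nat_ge (20000 + (s0 : ℝ) + s1 + C1 + log C)
  have hlC : 0 ≤ log C := log_nonneg hC
  have hs0R : (0 : ℝ) ≤ s0 := by positivity
  have hs1R : (0 : ℝ) ≤ s1 := by positivity
  have ht1 : (20000 : ℝ) ≤ t := by linarith
  have htC1 : C1 ≤ t := by linarith
  have htC : log C ≤ t := by linarith
  have ht0 : (0 : ℝ) < t := by linarith
  have htN : 20000 ≤ t := by exact_mod_cast ht1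
  have hts0 : s0 ≤ t := by
    have : (s0 : ℝ) ≤ t := by linarith
    exact_mod_cast this
  have hts1 : s1 ≤ t := by
    have : (s1 : ℝ) ≤ t := by linarith
    exact_mod_cast this
  have ht8 : t ≤ t ^ 8 := Nat.le_self_pow (by norm_num) t
  -- with `s = t ^ 8`, the primes of `primeSet t` are at most `s ^ 3 = t ^ 24`, and their sum is at
  -- least `t ^ 44`, which beats the exponents of order `s ^ 5 = t ^ 40`
  obtain ⟨a, ha0, hab, hprimes⟩ := hsieg (t ^ 8) (hts0.trans ht8)
  have hz := hzero (t ^ 8) (hts1.trans ht8) a ha0 hab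
  have key := one_le_of_zeros hC hg a (exp_pos _).le hab hz (primeSet t)
    (fun p hp => by
      rw [primeSet, Finset.mem_filter] at hp
      exact hp.2.two_le)
    (fun p hp => by
      rw [primeSet, Finset.mem_filter, Finset.mem_Ioc] at hp
      have h22 : 2 < t ^ 22 := by
        have : t ≤ t ^ 22 := Nat.le_self_pow (by norm_num) t
        omega
      refine hprimes p hp.2 (by omega) ?_
      rw [← pow_mul]
      exact hp.1.2)
  have hlt : log t ≤ t := log_natCast_le t
  have hpw : ∀ k : ℕ, 20000 * (t : ℝ) ^ k ≤ t ^ (k + 1) := fun k => by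
    rw [pow_succ, mul_comm]; gcongr
  have hone : ∀ k : ℕ, (1 : ℝ) ≤ t ^ k := fun k => one_le_pow₀ (by linarith)
  have b1 : (((t ^ 8) ^ 4 : ℕ) : ℝ) ^ 3 ≤ exp (96 * t) := by
    refine le_exp_of_log_le (by positivity) ?_
    push_cast
    rw [← pow_mul, ← pow_mul, log_pow]; push_cast; linarith
  have b2 : exp (C1 * ((t ^ 8 : ℕ) : ℝ) ^ 5) ≤ exp (t ^ 41) := by
    apply exp_le_exp.2
    push_cast
    rw [← pow_mul, pow_succ _ 40, mul_comm]
    gcongr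
  have b3 : C ^ (4 * (t ^ 8) ^ 4) ≤ exp (4 * t ^ 33) := by
    refine le_exp_of_log_le (by positivity) ?_
    rw [log_pow]; push_cast
    rw [← pow_mul, pow_succ _ 32, ← mul_assoc]
    gcongr
  have b4 : (((((t ^ 8) ^ 30 : ℕ) : ℝ)) + 2) ^ (24 * (t ^ 8) ^ 4) ≤ exp (5784 * t ^ 33) := by
    refine le_exp_of_log_le (by positivity) ?_
    rw [log_pow]; push_cast
    have e1 : (((t : ℝ) ^ 8) ^ 30 + 2) ≤ t ^ 241 := by
      rw [← pow_mul]
      have h1 : 20000 * (t : ℝ) ^ 240 ≤ t ^ 241 := hpw 240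
      have h2 := hone 240
      norm_num
      linarith
    have e2 : log (((t : ℝ) ^ 8) ^ 30 + 2) ≤ 241 * t := by
      refine (log_le_log (by positivity) e1).trans ?_
      rw [log_pow]; push_cast; linarith
    calc _ ≤ 24 * ((t : ℝ) ^ 8) ^ 4 * (241 * t) := by gcongr
      _ = _ := by ring
  have four_le : (4 : ℝ) ≤ exp 2 := by
    have : exp 2 = exp 1 * exp 1 := by rw [← exp_add]; norm_num
    nlinarith [exp_one_gt_d9]
  have b5 : (4 : ℝ) ^ (primeSet t).card ≤ exp (2 * t ^ 24) := by
    calc (4 : ℝ) ^ (primeSet t).card ≤ 4 ^ (t ^ 24) :=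
          pow_le_pow_right₀ (by norm_num) (card_primeSet_le t)
      _ ≤ (exp 2) ^ (t ^ 24) := by gcongr
      _ = _ := by rw [← exp_nat_mul]; congr 1; push_cast; ring
  have b6 := prod_q0_pow_le (t := t) (by omega)
  have hfin : (1 : ℝ) ≤ exp (2 + (96 * t + t ^ 41 + (4 * t ^ 33 + 5784 * t ^ 33)) + 2 * t ^ 24 +
      -(1 / 2) * t ^ 44) := by
    refine key.trans ?_
    rw [exp_add, exp_add, exp_add 2, exp_add (96 * (t : ℝ) + t ^ 41), exp_add (96 * (t : ℝ)),
      exp_add (4 * (t : ℝ) ^ 33)]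
    gcongr
  rw [one_le_exp_iff] at hfin
  have q1 : (t : ℝ) ≤ t ^ 41 := le_self_pow₀ (by linarith) (by norm_num)
  have q2 : (t : ℝ) ^ 33 ≤ t ^ 41 := pow_le_pow_right₀ (by linarith) (by norm_num)
  have q3 : (t : ℝ) ^ 24 ≤ t ^ 41 := pow_le_pow_right₀ (by linarith) (by norm_num)
  have q4 : 20000 * (t : ℝ) ^ 41 ≤ t ^ 42 := hpw 41
  have q5 : (t : ℝ) ^ 42 ≤ t ^ 44 := pow_le_pow_right₀ (by linarith) (by norm_num)
  have q6 := hone 41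
  linarith

end

end Xi2

theorem xi2_transcendental (ξ2 : ℝ)
    (h2 : Filter.Tendsto (fun N : ℕ => ∏ n ∈ Finset.Icc 3 N, (1 - 1 / (F n : ℝ)))
      Filter.atTop (nhds ξ2)) :
    Transcendental ℚ ξ2 := by
  exact fun h => Xi2.not_isAlgebraic_cc (Xi2.isAlgebraic_cc h2 h)
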